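/- Let c be a rational number with c ∉ {−5, −5/2, −155/72, −2, −5/4, 0, 19/16}. If c ∉ Im λ and c ∉ Im η, then the fourth dynatomic polynomial Φ_{4,c} is irreducible over ℚ, and its Galois group G_c is isomorphic to the group 𝒲. -/

import Mathlib

open Polynomial

/-- The fourth dynatomic polynomial of `x^2 + c`. -/
noncomputable def Phi4 {K : Type*} [Field K] (c : K) : K[X] :=
  X ^ 12 + C (6 * c) * X ^ 10 + X ^ 9 + C (15 * c ^ 2 + 3 * c) * X ^ 8 +
    C (4 * c) * X ^ 7 + C (20 * c ^ 3 + 12 * c ^ 2 + 1) * X ^ 6 +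
    C (6 * c ^ 2 + 2 * c) * X ^ 5 +
    C (15 * c ^ 4 + 18 * c ^ 3 + 3 * c ^ 2 + 4 * c) * X ^ 4 +
    C (4 * c ^ 3 + 4 * c ^ 2 + 1) * X ^ 3 +
    C (6 * c ^ 5 + 12 * c ^ 4 + 6 * c ^ 3 + 5 * c ^ 2 + c) * X ^ 2 +
    C (c ^ 4 + 2 * c ^ 3 + c ^ 2 + 2 * c) * X +
    C (c ^ 6 + 3 * c ^ 5 + 3 * c ^ 4 + 3 * c ^ 3 + 2 * c ^ 2 + 1)

/-- The group 𝒲: the centralizer in S₁₂ of (1,2,3,4)(5,6,7,8)(9,10,11,12)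
(here written on {0,…,11}). -/
def Wgroup : Subgroup (Equiv.Perm (Fin 12)) :=
  Subgroup.centralizer
    {([0, 1, 2, 3] : List (Fin 12)).formPerm *
      ([4, 5, 6, 7] : List (Fin 12)).formPerm *
      ([8, 9, 10, 11] : List (Fin 12)).formPerm}

section S_nt1

/-- Eisenstein integers. -/
abbrev Eis : Type := QuadraticAlgebra ℤ (-1) (-1)

namespace Eis

open scoped QuadraticAlgebra

lemma norm_eq (z : Eis) : QuadraticAlgebra.norm z = z.re ^ 2 - z.re * z.im + z.im ^ 2 := by
  rw [QuadraticAlgebra.norm_def]; ring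

lemma four_norm (z : Eis) :
    4 * QuadraticAlgebra.norm z = (2 * z.re - z.im) ^ 2 + 3 * z.im ^ 2 := by
  rw [norm_eq]; ring

lemma norm_nonneg (z : Eis) : 0 ≤ QuadraticAlgebra.norm z := by
  have := four_norm z
  nlinarith [sq_nonneg (2 * z.re - z.im), sq_nonneg z.im]

lemma norm_eq_zero' {z : Eis} (h : QuadraticAlgebra.norm z = 0) : z = 0 := by
  have h1 := four_norm z
  rw [h] at h1
  have h2 : z.im = 0 := by
    have : z.im ^ 2 = 0 := by nlinarith [sq_nonneg (2 * z.re - z.im), sq_nonneg z.im]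
    exact pow_eq_zero_iff two_ne_zero |>.1 this
  have h3 : z.re = 0 := by
    rw [h2] at h1
    have : z.re ^ 2 = 0 := by linarith
    exact pow_eq_zero_iff two_ne_zero |>.1 this
  ext <;> simp [h2, h3]

/-- rounded quotient -/
def quo (x y : Eis) : Eis :=
  ⟨round (((x * star y).re : ℚ) / (QuadraticAlgebra.norm y : ℤ)),
   round (((x * star y).im : ℚ) / (QuadraticAlgebra.norm y : ℤ))⟩

lemma norm_rem_lt (x y : Eis) (hy : y ≠ 0) :
    QuadraticAlgebra.norm (x - y * quo x y) < QuadraticAlgebra.norm y := by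
  set N := QuadraticAlgebra.norm y with hN
  have hNpos : 0 < N := lt_of_le_of_ne (norm_nonneg y) (fun h => hy (norm_eq_zero' h.symm))
  set w := x * star y with hw
  have hys : y * star y = (N : Eis) := by
    have := QuadraticAlgebra.algebraMap_norm_eq_mul_star y
    rw [← this]; rfl
  -- (x - y q) * star y = w - N q
  have h1 : (x - y * quo x y) * star y = w - (N : Eis) * quo x y := by
    rw [← hys, hw]; ring
  have h2 : QuadraticAlgebra.norm (x - y * quo x y) * N
      = QuadraticAlgebra.norm (w - (N : Eis) * quo x y) := by
    rw [← h1, map_mul, QuadraticAlgebra.norm_star]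
  set a := round ((w.re : ℚ) / (N : ℤ)) with ha
  set b := round ((w.im : ℚ) / (N : ℤ)) with hb
  have hre : (w - (N : Eis) * quo x y).re = w.re - N * a := by
    simp [quo, ha, hw, hN]
  have him : (w - (N : Eis) * quo x y).im = w.im - N * b := by
    simp [quo, hb, hw, hN]
  have hNq : (0 : ℚ) < N := by exact_mod_cast hNpos
  have hbd : ∀ v : ℤ, |2 * (v - N * round ((v : ℚ) / (N : ℤ)))| ≤ N := by
    intro v
    have := abs_sub_round ((v : ℚ) / (N : ℤ))
    have h3 : |2 * ((v : ℚ) - N * round ((v : ℚ) / (N : ℤ)))| ≤ N := by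
      have h4 : 2 * ((v : ℚ) - N * round ((v : ℚ) / (N : ℤ)))
        = (2 * N) * ((v : ℚ) / (N : ℤ) - round ((v : ℚ) / (N : ℤ))) := by
        field_simp
      rw [h4, abs_mul, abs_of_pos (by positivity)]
      nlinarith
    exact_mod_cast h3
  have hA := hbd w.re
  have hB := hbd w.im
  rw [← ha] at hA
  rw [← hb] at hB
  rw [norm_eq (w - (N : Eis) * quo x y), hre, him] at h2
  set A := w.re - N * a
  set B := w.im - N * b
  have hA' := abs_le.1 hA
  have hB' := abs_le.1 hB
  have hA2 : (2 * A) ^ 2 ≤ N ^ 2 := sq_le_sq' hA'.1 hA'.2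
  have hB2 : (2 * B) ^ 2 ≤ N ^ 2 := sq_le_sq' hB'.1 hB'.2
  have hAB : 4 * (A ^ 2 - A * B + B ^ 2) ≤ 3 * N ^ 2 := by
    nlinarith [sq_nonneg (A + B)]
  have : QuadraticAlgebra.norm (x - y * quo x y) * N < N * N := by
    rw [h2]; nlinarith
  exact lt_of_mul_lt_mul_right this hNpos.le

noncomputable instance : EuclideanDomain Eis :=
  { (inferInstance : CommRing Eis) with
    exists_pair_ne := ⟨0, 1, by
      intro h; have := congrArg QuadraticAlgebra.re h; simp at this⟩
    quotient := quo
    quotient_zero := by intro x; ext <;> simp [quo]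
    remainder := fun x y => x - y * quo x y
    quotient_mul_add_remainder_eq := by intro a b; ring
    r := fun x y => (QuadraticAlgebra.norm x).natAbs < (QuadraticAlgebra.norm y).natAbs
    r_wellFounded := (measure fun x : Eis => (QuadraticAlgebra.norm x).natAbs).wf
    remainder_lt := by
      intro x y hy
      have h1 := norm_rem_lt x y hy
      have h2 := norm_nonneg (x - y * quo x y)
      show (QuadraticAlgebra.norm (x - y * quo x y)).natAbs < _
      omega
    mul_left_not_lt := by
      intro x y hy
      have h1 : 0 < QuadraticAlgebra.norm y :=
        lt_of_le_of_ne (norm_nonneg y) (fun h => hy (norm_eq_zero' h.symm))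
      rw [not_lt, map_mul, Int.natAbs_mul]
      exact Nat.le_mul_of_pos_right _ (by omega) }

lemma cube_lemma (q r n : ℤ) (h : q ^ 2 + 3 * r ^ 2 = n ^ 3) (hodd : n % 2 = 1)
    (hcop : IsCoprime q r) (h3 : ¬ (3 : ℤ) ∣ q) :
    ∃ s t : ℤ, q = s ^ 3 - 9 * s * t ^ 2 ∧ r = 3 * s ^ 2 * t - 3 * t ^ 3 := by
  set z : Eis := ⟨q + r, 2 * r⟩ with hz
  have hc1 : IsCoprime (n ^ 3) (2 * q) := by
    refine IsCoprime.mul_right ?_ ?_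
    · refine IsCoprime.pow_left ?_
      exact ⟨1, -(n / 2), by omega⟩
    · rw [← h, sq, mul_comm]
      refine IsCoprime.symm ?_
      rw [add_comm]
      refine IsCoprime.add_mul_right_right (IsCoprime.mul_right ?_ hcop.pow_right) q
      exact (((by norm_num : Prime (3 : ℤ)).irreducible.coprime_iff_not_dvd).2 h3).symm
  have hzz : z * star z = ((n ^ 3 : ℤ) : Eis) := by
    have h1 := QuadraticAlgebra.algebraMap_norm_eq_mul_star z
    rw [← h1, norm_eq, ← h]
    have : z.re ^ 2 - z.re * z.im + z.im ^ 2 = q ^ 2 + 3 * r ^ 2 := by simp only [hz]; ring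
    rw [this]; rfl
  have hzs : z + star z = ((2 * q : ℤ) : Eis) := by
    ext
    · rw [QuadraticAlgebra.re_intCast]; simp [hz]; ring
    · rw [QuadraticAlgebra.im_intCast]; simp [hz]
  have hcz : IsCoprime z (star z) := by
    obtain ⟨a, b, hab⟩ := hc1
    refine ⟨(a : Eis) * star z + b, b, ?_⟩
    have : ((a * n ^ 3 + b * (2 * q) : ℤ) : Eis) = 1 := by rw [hab]; simp
    rw [Int.cast_add, Int.cast_mul, Int.cast_mul b, ← hzz, ← hzs] at this
    rw [← this]; ring
  letI : GCDMonoid Eis := UniqueFactorizationMonoid.toGCDMonoid Eis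
  obtain ⟨d0, hd0⟩ := exists_associated_pow_of_mul_eq_pow' hcz (c := (n : Eis)) (k := 3)
    (by rw [hzz]; push_cast; rfl)
  -- norm of d0 is odd
  have hnz : QuadraticAlgebra.norm z = n ^ 3 := by
    rw [norm_eq, ← h]; simp only [hz]; ring
  have hnd : ∀ d : Eis, Associated (d ^ 3) z → QuadraticAlgebra.norm d % 2 = 1 := by
    rintro d ⟨u, hu⟩
    have h1 := congrArg QuadraticAlgebra.norm hu
    rw [map_mul, map_pow, hnz] at h1
    by_contra hne
    have h2 : (2 : ℤ) ∣ n ^ 3 := by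
      rw [← h1]
      exact Dvd.dvd.mul_right (dvd_pow (by omega) (by norm_num)) _
    have := Int.prime_two.dvd_of_dvd_pow h2
    omega
  -- adjust by omega
  obtain ⟨d, hd, hdim⟩ : ∃ d : Eis, Associated (d ^ 3) z ∧ d.im % 2 = 0 := by
    have hn0 := hnd d0 hd0
    rw [norm_eq] at hn0
    set w : Eis := ⟨0, 1⟩ with hw
    have hw3 : w ^ 3 = 1 := by
      ext <;> simp [hw, pow_succ]
    rcases Int.emod_two_eq_zero_or_one d0.im with h1 | h1
    · exact ⟨d0, hd0, h1⟩
    rcases Int.emod_two_eq_zero_or_one d0.re with h2 | h2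
    · refine ⟨w ^ 2 * d0, ?_, ?_⟩
      · rw [mul_pow, ← pow_mul, mul_comm 2 3, pow_mul, hw3, one_pow, one_mul]; exact hd0
      · have : (w ^ 2 * d0).im = -d0.re := by simp [hw, pow_succ]; try ring
        rw [this]; omega
    · refine ⟨w * d0, ?_, ?_⟩
      · rw [mul_pow, hw3, one_mul]; exact hd0
      · have : (w * d0).im = d0.re - d0.im := by simp [hw]; try ring
        rw [this]; omega
  obtain ⟨t, ht⟩ : ∃ t, d.im = 2 * t := ⟨d.im / 2, by omega⟩
  obtain ⟨s, hs⟩ : ∃ s, d.re = s + t := ⟨d.re - t, by ring⟩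
  have hdn := hnd d hd
  obtain ⟨u, hu⟩ := hd
  have hcube_re : (d ^ 3).re = (s ^ 3 - 9 * s * t ^ 2) + (3 * s ^ 2 * t - 3 * t ^ 3) := by
    simp [pow_succ, ht, hs]; ring
  have hcube_im : (d ^ 3).im = 2 * (3 * s ^ 2 * t - 3 * t ^ 3) := by
    simp [pow_succ, ht, hs]; ring
  set S := s ^ 3 - 9 * s * t ^ 2
  set T := 3 * s ^ 2 * t - 3 * t ^ 3
  have hun : QuadraticAlgebra.norm (u : Eis) = 1 := by
    have h1 : IsUnit (QuadraticAlgebra.norm (u : Eis)) := QuadraticAlgebra.isUnit_iff_norm_isUnit.1 u.isUnit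
    rcases Int.isUnit_iff.1 h1 with h | h
    · exact h
    · have := norm_nonneg (u : Eis); omega
  have hre := congrArg QuadraticAlgebra.re hu
  have him := congrArg QuadraticAlgebra.im hu
  simp only [QuadraticAlgebra.re_mul, QuadraticAlgebra.im_mul, hcube_re, hcube_im, hz] at hre him
  have hST : (S + T) % 2 = 1 := by
    have h1 : QuadraticAlgebra.norm (d ^ 3) % 2 = 1 := by
      rw [map_pow, pow_succ, pow_succ, pow_one, Int.mul_emod, Int.mul_emod (QuadraticAlgebra.norm d), hdn]; rfl
    rw [norm_eq, hcube_re, hcube_im] at h1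
    rcases Int.emod_two_eq_zero_or_one (S + T) with h2 | h2
    · exfalso
      obtain ⟨k, hk⟩ : ∃ k, S + T = 2 * k := ⟨(S + T) / 2, by omega⟩
      rw [hk] at h1
      ring_nf at h1; omega
    · exact h2
  set u1 := (u : Eis).re
  set u2 := (u : Eis).im
  have hu2even : u2 % 2 = 0 := by
    rcases Int.emod_two_eq_zero_or_one u2 with h2 | h2
    · exact h2
    · exfalso
      have : ((S + T) * u2) % 2 = 1 := by rw [Int.mul_emod, hST, h2]; rfl
      have h4 : (S + T) * u2 = 2 * (r - T * u1 + T * u2) := by linear_combination him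
      omega
  have h4 := four_norm (u : Eis)
  rw [hun] at h4
  have hu2 : u2 = 0 := by
    have : u2 ^ 2 < 2 ^ 2 := by nlinarith [sq_nonneg (2 * u1 - u2)]
    have := abs_lt_of_sq_lt_sq this (by norm_num)
    rw [abs_lt] at this
    omega
  have hu1 : u1 ^ 2 = 1 := by
    change 4 * 1 = (2 * u1 - u2) ^ 2 + 3 * u2 ^ 2 at h4
    rw [hu2] at h4; linarith
  rw [hu2] at hre him
  rcases sq_eq_one_iff.1 hu1 with h1 | h1
  · rw [h1] at hre him
    exact ⟨s, t, by linarith, by linarith⟩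
  · rw [h1] at hre him
    refine ⟨-s, -t, ?_, ?_⟩
    · have : q = -S := by linarith
      rw [this]; ring
    · have : r = -T := by linarith
      rw [this]; ring

end Eis

end S_nt1

section S_nt1b

lemma cubes_descent : ∀ N : ℕ, ∀ a b c : ℤ, c.natAbs = N → IsCoprime a b →
    a ^ 3 + b ^ 3 = 4 * c ^ 3 → c = 0 := by
  intro N
  induction N using Nat.strong_induction_on with
  | _ N ih =>
  intro a b c hN hab h
  by_contra hc0
  have hsum : Even (a + b) := by
    have h1 : Even (a ^ 3 + b ^ 3) := ⟨2 * c ^ 3, by rw [h]; ring⟩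
    simpa [Int.even_add, Int.even_pow] using h1
  obtain ⟨p, hp⟩ : ∃ p, a + b = 2 * p := hsum.two_dvd
  set q := a - p with hq
  have ha : a = p + q := by rw [hq]; ring
  have hb : b = p - q := by rw [hq]; linarith
  clear_value q
  have hpq : IsCoprime p q := by
    obtain ⟨u, v, huv⟩ := hab
    exact ⟨u + v, u - v, by rw [← huv, ha, hb]; ring⟩
  have h1 : p * (p ^ 2 + 3 * q ^ 2) = 2 * c ^ 3 := by
    rw [ha, hb] at h; linarith
  have hnotboth : ¬ (Even p ∧ Even q) := by
    rintro ⟨h2, h3⟩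
    have := hpq.isUnit_of_dvd' h2.two_dvd h3.two_dvd
    rw [Int.isUnit_iff] at this; omega
  have hpar : Even p ∧ Odd q := by
    have h2 : Even (p * (p ^ 2 + 3 * q ^ 2)) := ⟨c ^ 3, by rw [h1]; ring⟩
    have h30 : ¬ Even (3 : ℤ) := by decide
    have h5 : ¬ (Odd p ∧ Odd q) := by
      rintro ⟨h6, h7⟩
      have h8 : Even a := by rw [ha]; exact h6.add_odd h7
      have h9 : Even b := by rw [hb]; exact h6.sub_odd h7
      have := hab.isUnit_of_dvd' h8.two_dvd h9.two_dvd
      rw [Int.isUnit_iff] at this; omega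
    simp only [Int.even_mul, Int.even_add, Int.even_pow, h30] at h2
    rw [← Int.not_even_iff_odd] at h5 ⊢
    rw [← Int.not_even_iff_odd] at h5
    tauto
  obtain ⟨hpe, hqo⟩ := hpar
  have h3c : (3 : ℤ) ∣ c := by
    have key : ∀ a b c : ZMod 9, a ^ 3 + b ^ 3 = 4 * c ^ 3 → c ^ 3 = 0 := by decide
    have h2 := key a b c (by exact_mod_cast congrArg (Int.cast : ℤ → ZMod 9) h)
    have h4 : ((c ^ 3 : ℤ) : ZMod 9) = 0 := by exact_mod_cast h2
    rw [ZMod.intCast_zmod_eq_zero_iff_dvd] at h4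
    exact Int.prime_three.dvd_of_dvd_pow (dvd_trans (by norm_num) h4)
  obtain ⟨c1, hc1⟩ := h3c
  have h3p : (3 : ℤ) ∣ p := by
    refine Int.prime_three.dvd_of_dvd_pow (n := 3) ?_
    exact ⟨18 * c1 ^ 3 - p * q ^ 2, by rw [hc1] at h1; linarith⟩
  obtain ⟨p1, hp1⟩ := h3p
  have h3q : ¬ (3 : ℤ) ∣ q := by
    intro h2
    have := hpq.isUnit_of_dvd' ⟨p1, hp1⟩ h2
    rw [Int.isUnit_iff] at this; omega
  have h2 : p1 * (q ^ 2 + 3 * p1 ^ 2) = 6 * c1 ^ 3 := by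
    rw [hc1, hp1] at h1; linarith
  have h3p1 : (3 : ℤ) ∣ p1 := by
    have h3 : (3 : ℤ) ∣ p1 * q ^ 2 := ⟨2 * c1 ^ 3 - p1 ^ 3, by linarith⟩
    rcases Int.prime_three.dvd_or_dvd h3 with h4 | h4
    · exact h4
    · exact absurd (Int.prime_three.dvd_of_dvd_pow h4) h3q
  obtain ⟨m', hm'⟩ : ∃ m', p1 = 6 * m' := by
    have := hpe.two_dvd
    exact ⟨p1 / 6, by omega⟩
  have h3 : m' * (q ^ 2 + 3 * p1 ^ 2) = c1 ^ 3 := by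
    have : 6 * (m' * (q ^ 2 + 3 * p1 ^ 2)) = 6 * c1 ^ 3 := by
      linear_combination h2 - (q ^ 2 + 3 * p1 ^ 2) * hm'
    linarith
  have hqp1 : IsCoprime q p1 := by
    rw [hp1] at hpq
    exact (hpq.of_mul_left_right).symm
  have hcop : IsCoprime m' (q ^ 2 + 3 * p1 ^ 2) := by
    have h4 : IsCoprime m' q := by
      rw [hm'] at hqp1; exact hqp1.of_mul_right_right.symm
    have : q ^ 2 + 3 * p1 ^ 2 = q ^ 2 + m' * (108 * m') := by rw [hm']; ring
    rw [this]
    exact (h4.pow_right (n := 2)).add_mul_left_right _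
  obtain ⟨m, hm⟩ := Int.eq_pow_of_mul_eq_pow_odd_left hcop (by decide : Odd 3) h3
  obtain ⟨n, hn⟩ := Int.eq_pow_of_mul_eq_pow_odd_right hcop (by decide : Odd 3) h3
  have hp1e : Even p1 := ⟨3 * m', by rw [hm']; ring⟩
  have hnodd : Odd n := by
    have h4 : Odd (n ^ 3) := by
      rw [← hn]
      exact hqo.pow.add_even ((hp1e.pow_of_ne_zero two_ne_zero).mul_left 3)
    simpa [Int.odd_pow] using h4
  obtain ⟨s, t, hs, ht⟩ := Eis.cube_lemma q p1 n hn (Int.odd_iff.1 hnodd) hqp1 h3q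
  have h5 : 2 * m ^ 3 = t * ((s - t) * (s + t)) := by
    rw [← hm]; linarith
  have hst : IsCoprime s t := by
    have h6 : q = s * (s ^ 2 - 9 * t ^ 2) := by rw [hs]; ring
    have h7 : p1 = t * (3 * s ^ 2 - 3 * t ^ 2) := by rw [ht]; ring
    rw [h6, h7] at hqp1
    exact hqp1.of_mul_left_left.of_mul_right_left
  have hso : Odd s ∧ Even t := by
    have h6 : q = s * (s ^ 2 - 9 * t ^ 2) := by rw [hs]; ring
    rw [h6, Int.odd_mul, Int.odd_sub, Int.odd_pow] at hqo
    have h9 : ¬ Even (9 : ℤ) := by decide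
    simp only [Int.even_mul, Int.even_pow, h9] at hqo
    refine ⟨hqo.1, ?_⟩
    have := hqo.2.1 (Or.inl hqo.1)
    tauto
  obtain ⟨hso, hte⟩ := hso
  obtain ⟨t1, ht1⟩ := hte.two_dvd
  have h6 : t1 * ((s - t) * (s + t)) = m ^ 3 := by
    have : 2 * (t1 * ((s - t) * (s + t))) = 2 * m ^ 3 := by
      linear_combination -h5 - ((s - t) * (s + t)) * ht1
    linarith
  have hst1 : IsCoprime t1 s := by
    rw [ht1] at hst; exact hst.of_mul_right_right.symm
  have hc2 : IsCoprime t1 (s - t) := by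
    have : s - t = s + t1 * (-2) := by rw [ht1]; ring
    rw [this]; exact hst1.add_mul_left_right _
  have hc3 : IsCoprime t1 (s + t) := by
    have : s + t = s + t1 * 2 := by rw [ht1]; ring
    rw [this]; exact hst1.add_mul_left_right _
  have hodd2 : Odd (s - t) := hso.sub_even hte
  have hc4 : IsCoprime (s - t) (s + t) := by
    have h7 : IsCoprime (s - t) 2 := by
      obtain ⟨k, hk⟩ := hodd2
      exact ⟨1, -k, by rw [hk]; ring⟩
    have h8 : IsCoprime (s - t) (4 * t1) := by
      have : (4 : ℤ) * t1 = 2 * (2 * t1) := by ring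
      rw [this]
      exact h7.mul_right (h7.mul_right hc2.symm)
    have : s + t = 4 * t1 + (s - t) * 1 := by rw [ht1]; ring
    rw [this]; exact h8.add_mul_left_right _
  have hc5 : IsCoprime t1 ((s - t) * (s + t)) := hc2.mul_right hc3
  obtain ⟨A, hA⟩ := Int.eq_pow_of_mul_eq_pow_odd_left hc5 (by decide : Odd 3) h6
  obtain ⟨E, hE⟩ := Int.eq_pow_of_mul_eq_pow_odd_right hc5 (by decide : Odd 3) h6
  obtain ⟨B, hB⟩ := Int.eq_pow_of_mul_eq_pow_odd_left hc4 (by decide : Odd 3) hE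
  obtain ⟨D, hD⟩ := Int.eq_pow_of_mul_eq_pow_odd_right hc4 (by decide : Odd 3) hE
  have hnew : D ^ 3 + (-B) ^ 3 = 4 * A ^ 3 := by
    have : (-B) ^ 3 = - B ^ 3 := by ring
    rw [this, ← hA, ← hB, ← hD, ht1]; ring
  have hcopn : IsCoprime D (-B) := by
    rw [hB, hD] at hc4
    exact ((IsCoprime.pow_iff (by norm_num) (by norm_num)).1 hc4).symm.neg_right
  have hc10 : c1 ≠ 0 := by rintro rfl; exact hc0 (by rw [hc1]; ring)
  have hdvd : A ∣ c1 := by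
    rw [← Int.pow_dvd_pow_iff (n := 3) (by norm_num), ← h3, hm, ← h6, hA]
    exact Dvd.dvd.mul_right (Dvd.dvd.mul_right dvd_rfl _) _
  have hle := Nat.le_of_dvd (Int.natAbs_pos.2 hc10) (Int.natAbs_dvd_natAbs.2 hdvd)
  have hA0 : A = 0 := ih A.natAbs (by omega) D (-B) A rfl hcopn hnew
  rw [hA0, zero_dvd_iff] at hdvd
  exact hc10 hdvd

lemma no_cubes_four (u w : ℚ) : u ^ 3 + w ^ 3 ≠ 4 := by
  intro h
  have hn0 : (u.den : ℚ) ≠ 0 := by exact_mod_cast u.den_nz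
  have h1 : (w * u.den) ^ 3 = ((4 * (u.den : ℤ) ^ 3 - u.num ^ 3 : ℤ) : ℚ) := by
    have hu : u * u.den = u.num := Rat.mul_den_eq_num u
    push_cast
    rw [← hu]
    linear_combination (u.den : ℚ) ^ 3 * h
  have hint : IsIntegral ℤ (w * u.den) := by
    refine IsIntegral.of_pow (n := 3) (by norm_num) ?_
    rw [h1]; exact isIntegral_algebraMap
  obtain ⟨B, hB⟩ := IsIntegrallyClosed.isIntegral_iff.1 hint
  have hB' : (B : ℚ) = w * u.den := hB
  rw [← hB'] at h1
  have h2 : u.num ^ 3 + B ^ 3 = 4 * (u.den : ℤ) ^ 3 := by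
    have : B ^ 3 = 4 * (u.den : ℤ) ^ 3 - u.num ^ 3 := by exact_mod_cast h1
    linarith
  have hcop : IsCoprime u.num (u.den : ℤ) := by
    rw [Int.isCoprime_iff_gcd_eq_one]
    exact u.reduced
  have hcopB : IsCoprime u.num B := by
    by_contra hnc
    rw [Int.isCoprime_iff_gcd_eq_one] at hnc
    obtain ⟨l, hl, hld⟩ := Nat.exists_prime_and_dvd hnc
    have hlp : Prime (l : ℤ) := Nat.prime_iff_prime_int.1 hl
    have hd1 : (l : ℤ) ∣ u.num := dvd_trans (Int.natCast_dvd_natCast.2 hld) (Int.gcd_dvd_left ..)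
    have hd2 : (l : ℤ) ∣ B := dvd_trans (Int.natCast_dvd_natCast.2 hld) (Int.gcd_dvd_right ..)
    have hd3 : (l : ℤ) ^ 3 ∣ 4 * (u.den : ℤ) ^ 3 := by
      rw [← h2]; exact dvd_add (pow_dvd_pow_of_dvd hd1 3) (pow_dvd_pow_of_dvd hd2 3)
    have hd4 : IsCoprime ((l : ℤ) ^ 3) ((u.den : ℤ) ^ 3) :=
      (IsCoprime.of_isCoprime_of_dvd_left hcop hd1).pow
    have hd5 := hd4.dvd_of_dvd_mul_right hd3
    have := Int.le_of_dvd (by norm_num) hd5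
    have hl2 : (2 : ℤ) ≤ l := by exact_mod_cast hl.two_le
    have : (2 : ℤ) ^ 3 ≤ (l : ℤ) ^ 3 := by gcongr
    omega
  have := cubes_descent _ u.num B u.den rfl hcopB h2
  exact hn0 (by exact_mod_cast this)

/-- `y² = x³ - 108` has no rational points. -/
lemma no_pts_108 (x y : ℚ) : y ^ 2 ≠ x ^ 3 - 108 := by
  intro h
  have hx : x ≠ 0 := by rintro rfl; nlinarith [sq_nonneg y]
  apply no_cubes_four ((18 + y) / (3 * x)) ((18 - y) / (3 * x))
  field_simp
  linear_combination 108 * h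

end S_nt1b

section S_nt2

lemma int_pow_left {u w b : ℤ} (k : ℕ) (h : IsCoprime u w) (hu : 0 < u) (hw : 0 < w)
    (e : u * w = b ^ k) : ∃ r : ℤ, 0 ≤ r ∧ u = r ^ k := by
  lift u to ℕ using hu.le
  lift w to ℕ using hw.le
  have h1 : Nat.Coprime u w := Nat.isCoprime_iff_coprime.1 h
  have h2 : u * w = b.natAbs ^ k := by
    have := congrArg Int.natAbs e
    rw [Int.natAbs_mul, Int.natAbs_pow] at this
    simpa using this
  obtain ⟨d, hd⟩ := exists_eq_pow_of_mul_eq_pow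
    (Nat.isUnit_iff.2 (show gcd u w = 1 from h1)) h2
  exact ⟨d, by positivity, by exact_mod_cast hd⟩

lemma pow4_split {u w b : ℤ} (h : IsCoprime u w) (hu : 0 < u) (hw : 0 < w)
    (e : u * w = b ^ 4) : ∃ r s : ℤ, u = r ^ 4 ∧ w = s ^ 4 ∧ r ^ 2 * s ^ 2 = b ^ 2 := by
  obtain ⟨r, hr, rfl⟩ := int_pow_left 4 h hu hw e
  obtain ⟨s, hs, rfl⟩ := int_pow_left 4 h.symm hw hu (by rw [mul_comm]; exact e)
  refine ⟨r, s, rfl, rfl, ?_⟩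
  have : (r ^ 2 * s ^ 2) ^ 2 = (b ^ 2) ^ 2 := by linear_combination e
  exact (pow_left_inj₀ (by positivity) (by positivity) two_ne_zero).1 this

lemma pow4_split5 {u w b : ℤ} (h : IsCoprime u w) (hu : 0 < u) (hw : 0 < w)
    (e : u * w = 5 * b ^ 4) : ∃ r s : ℤ, u + w = r ^ 4 + 5 * s ^ 4 ∧ r ^ 2 * s ^ 2 = b ^ 2 ∧
      IsCoprime r s := by
  have key : ∀ u w : ℤ, IsCoprime u w → 0 < u → 0 < w → u * w = 5 * b ^ 4 → (5 : ℤ) ∣ w →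
      ∃ r s : ℤ, u + w = r ^ 4 + 5 * s ^ 4 ∧ r ^ 2 * s ^ 2 = b ^ 2 ∧ IsCoprime r s := by
    rintro u w h hu hw e ⟨w', rfl⟩
    have h' : IsCoprime u w' := h.of_mul_right_right
    obtain ⟨r, s, rfl, rfl, h3⟩ := pow4_split (b := b) h' hu (by linarith) (by linarith)
    refine ⟨r, s, rfl, h3, ?_⟩
    exact (IsCoprime.pow_iff (by norm_num) (by norm_num)).1 h'
  have h5 : Prime (5 : ℤ) := by norm_num
  rcases h5.dvd_or_dvd (show (5 : ℤ) ∣ u * w from ⟨_, e⟩) with h0 | h0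
  · obtain ⟨r, s, h1, h2⟩ := key w u h.symm hw hu (by linarith) h0
    exact ⟨r, s, by linarith, h2⟩
  · exact key u w h hu hw e h0

lemma sq_eq_one_of_coprime {a b : ℤ} (h : IsCoprime a b) (e : a ^ 2 = b ^ 2) : a ^ 2 = 1 := by
  have h1 : IsCoprime (a ^ 2) (b ^ 2) := h.pow
  rw [← e] at h1
  have := isCoprime_self.1 h1
  rcases Int.isUnit_iff.1 this with h | h
  · exact h
  · nlinarith [sq_nonneg a]

lemma prime_dvd_of_sq_dvd_five {l w : ℤ} (hl : Prime l) (h : l ^ 2 ∣ 5 * w ^ 4) : l ∣ w := by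
  by_contra hw
  have h1 : IsCoprime (l ^ 2) (w ^ 4) := ((hl.irreducible.coprime_iff_not_dvd).2 hw).pow
  have h2 := h1.dvd_of_dvd_mul_right h
  have h5 : Prime (5 : ℤ) := by norm_num
  have h3 : Squarefree (5 : ℤ) := h5.irreducible.squarefree
  exact hl.not_isUnit (h3 l (by rwa [← sq]))

lemma pos_of_sum_prod {U V : ℤ} (h1 : 0 < U + V) (h2 : 0 < U * V) : 0 < U := by
  rcases mul_pos_iff.1 h2 with h | h
  · exact h.1
  · linarith [h.1, h.2]

set_option maxHeartbeats 1000000 in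
lemma quartic_descent : ∀ N : ℕ, ∀ a b c : ℤ, b.natAbs < N → IsCoprime a b →
    a ^ 4 - 2 * a ^ 2 * b ^ 2 + 5 * b ^ 4 = c ^ 2 → b = 0 ∨ a ^ 2 = b ^ 2 := by
  intro N
  induction N with
  | zero => intro a b c h; omega
  | succ N ih =>
  intro a b c hN hab e
  by_cases hb : b = 0
  · exact Or.inl hb
  right
  wlog hc : 0 ≤ c generalizing c with H
  · exact H (-c) (by rw [e]; ring) (by linarith)
  have hb4 : 0 < b ^ 4 := by positivity
  have hcc : c ^ 2 = (a ^ 2 - b ^ 2) ^ 2 + 4 * b ^ 4 := by linarith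
  have habs : |a ^ 2 - b ^ 2| < c := abs_lt_of_sq_lt_sq (by linarith) hc
  obtain ⟨hk1, hk2⟩ := abs_lt.1 habs
  -- split
  have hpar : (c - (a ^ 2 - b ^ 2)) % 2 = 0 := by
    rcases Int.emod_two_eq_zero_or_one (c - (a ^ 2 - b ^ 2)) with h | h
    · exact h
    exfalso
    have h1 : (c + (a ^ 2 - b ^ 2)) % 2 = 1 := by omega
    have h2 : ((c - (a ^ 2 - b ^ 2)) * (c + (a ^ 2 - b ^ 2))) % 2 = 1 := by
      rw [Int.mul_emod, h, h1]; rfl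
    have h3 : (c - (a ^ 2 - b ^ 2)) * (c + (a ^ 2 - b ^ 2)) = 4 * b ^ 4 := by linarith
    omega
  obtain ⟨w, hw⟩ : ∃ w, c - (a ^ 2 - b ^ 2) = 2 * w := ⟨(c - (a ^ 2 - b ^ 2)) / 2, by omega⟩
  obtain ⟨u, hu⟩ : ∃ u, c + (a ^ 2 - b ^ 2) = 2 * u := ⟨w + (a ^ 2 - b ^ 2), by linarith⟩
  have huw : u * w = b ^ 4 := by
    have : (2 * w) * (2 * u) = 4 * b ^ 4 := by rw [← hw, ← hu]; linarith
    linarith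
  have hupos : 0 < u := by linarith
  have hwpos : 0 < w := by linarith
  have hcop : IsCoprime u w := by
    refine isCoprime_of_prime_dvd (by rintro ⟨h, -⟩; omega) ?_
    intro l hl h1 h2
    have hlb : l ∣ b := hl.dvd_of_dvd_pow (huw ▸ Dvd.dvd.mul_right h1 w)
    have h3 : l ∣ a ^ 2 := by
      have : a ^ 2 = u - w + b * b := by linarith
      rw [this]; exact dvd_add (dvd_sub h1 h2) (Dvd.dvd.mul_right hlb _)
    exact hl.not_isUnit (hab.isUnit_of_dvd' (hl.dvd_of_dvd_pow h3) hlb)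
  obtain ⟨r, s, hr, hs, hrs⟩ := pow4_split hcop hupos hwpos huw
  have ha2 : a ^ 2 = r ^ 4 + r ^ 2 * s ^ 2 - s ^ 4 := by rw [hrs, ← hr, ← hs]; linarith
  have hrsc : IsCoprime r s := by
    rw [hr, hs] at hcop; exact (IsCoprime.pow_iff (by norm_num) (by norm_num)).1 hcop
  have hs0 : s ≠ 0 := by rintro rfl; rw [hs] at hwpos; simp at hwpos
  have hr0 : r ≠ 0 := by rintro rfl; rw [hr] at hupos; simp at hupos
  have hbabs : |b| = |r| * |s| := by
    rw [← abs_mul, ← sq_eq_sq_iff_abs_eq_abs]; rw [← hrs]; ring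
  -- r is odd
  have hrodd : r % 2 = 1 := by
    by_contra h
    obtain ⟨r', rfl⟩ : ∃ r', r = 2 * r' := ⟨r / 2, by omega⟩
    have hsodd : s % 2 = 1 := by
      by_contra h
      obtain ⟨s', rfl⟩ : ∃ s', s = 2 * s' := ⟨s / 2, by omega⟩
      have := hrsc.isUnit_of_dvd' (Dvd.intro _ rfl) (Dvd.intro _ rfl)
      rw [Int.isUnit_iff] at this; omega
    obtain ⟨s', rfl⟩ : ∃ s', s = 2 * s' + 1 := ⟨s / 2, by omega⟩
    have : a ^ 2 = 4 * (4 * r' ^ 4 + r' ^ 2 * (2 * s' + 1) ^ 2 - 4*s'^4 - 8*s'^3-6*s'^2-2*s'-1) + 3 := by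
      rw [ha2]; ring
    rcases Int.emod_two_eq_zero_or_one a with h | h
    · obtain ⟨a', rfl⟩ : ∃ s', a = 2 * s' := ⟨a / 2, by omega⟩
      ring_nf at this; omega
    · obtain ⟨a', rfl⟩ : ∃ s', a = 2 * s' + 1 := ⟨a / 2, by omega⟩
      ring_nf at this; omega
  rcases Int.emod_two_eq_zero_or_one s with hs2 | hs2
  · -- s even
    exfalso
    obtain ⟨w1, rfl⟩ : ∃ w1, s = 2 * w1 := ⟨s / 2, by omega⟩
    have hw1 : w1 ≠ 0 := by rintro rfl; exact hs0 rfl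
    obtain ⟨r', hr'⟩ : ∃ r', r = 2 * r' + 1 := ⟨r / 2, by omega⟩
    have haodd : a % 2 = 1 := by
      by_contra h
      obtain ⟨a', rfl⟩ : ∃ r', a = 2 * r' := ⟨a / 2, by omega⟩
      rw [hr'] at ha2
      ring_nf at ha2; omega
    obtain ⟨a', ha'⟩ : ∃ r', a = 2 * r' + 1 := ⟨a / 2, by omega⟩
    set U := 2 * r' ^ 2 + 2 * r' + w1 ^ 2 - a' with hU
    set V := 2 * r' ^ 2 + 2 * r' + w1 ^ 2 + a' + 1 with hV
    have hU2 : 2 * U = r ^ 2 + 2 * w1 ^ 2 - a := by rw [hr', ha', hU]; ring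
    have hV2 : 2 * V = r ^ 2 + 2 * w1 ^ 2 + a := by rw [hr', ha', hV]; ring
    have hUV : U * V = 5 * w1 ^ 4 := by
      have : (2 * U) * (2 * V) = 20 * w1 ^ 4 := by
        rw [hU2, hV2]; linear_combination -ha2
      linarith
    have hsum : U + V = r ^ 2 + 2 * w1 ^ 2 := by linarith
    have hsumpos : 0 < U + V := by rw [hsum]; positivity
    have hprodpos : 0 < U * V := by rw [hUV]; positivity
    have hUpos : 0 < U := pos_of_sum_prod hsumpos hprodpos
    have hVpos : 0 < V := pos_of_mul_pos_right hprodpos hUpos.le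
    have hc2 : IsCoprime U V := by
      refine isCoprime_of_prime_dvd (by rintro ⟨h, -⟩; omega) ?_
      intro l hl h1 h2
      have h3 : l ∣ w1 := prime_dvd_of_sq_dvd_five hl (by rw [← hUV, sq]; exact mul_dvd_mul h1 h2)
      have h4 : l ∣ r ^ 2 := by
        have : r ^ 2 = U + V - w1 * (2 * w1) := by rw [hsum]; ring
        rw [this]; exact dvd_sub (dvd_add h1 h2) (Dvd.dvd.mul_right h3 _)
      exact hl.not_isUnit (hrsc.isUnit_of_dvd' (hl.dvd_of_dvd_pow h4) (Dvd.dvd.mul_left h3 _))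
    obtain ⟨α, β, h1, h2, h3⟩ := pow4_split5 hc2 hUpos hVpos hUV
    have hβ : β ≠ 0 := by
      rintro rfl; apply hw1; have : w1 ^ 2 = 0 := by rw [← h2]; ring
      exact pow_eq_zero_iff (two_ne_zero) |>.1 this
    have hα : α ≠ 0 := by
      rintro rfl; apply hw1; have : w1 ^ 2 = 0 := by rw [← h2]; ring
      exact pow_eq_zero_iff (two_ne_zero) |>.1 this
    have hwabs : |w1| = |α| * |β| := by
      rw [← abs_mul, ← sq_eq_sq_iff_abs_eq_abs]; rw [← h2]; ring
    have hlt : β.natAbs < N := by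
      have e1 := Int.one_le_abs hα
      have e2 := Int.one_le_abs hr0
      have e3 := Int.one_le_abs hβ
      have : |β| < |b| := by
        rw [hbabs, abs_mul, hwabs]; norm_num
        nlinarith [mul_le_mul e1 e2 (by norm_num) (by positivity)]
      rw [Int.abs_eq_natAbs, Int.abs_eq_natAbs] at this
      omega
    rcases ih α β r hlt h3 (by rw [hsum, ← h2] at h1; linarith) with h | h
    · exact hβ h
    · have h5 := sq_eq_one_of_coprime h3 h
      have h6 : β ^ 2 = 1 := by rw [← h, h5]
      have h7 : r ^ 2 = 4 := by
        have : w1 ^ 2 = 1 := by rw [← h2, h5, h6]; rfl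
        have e4 : α ^ 4 = 1 := by rw [show α ^ 4 = (α ^ 2) ^ 2 by ring, h5]; rfl
        have e5 : β ^ 4 = 1 := by rw [show β ^ 4 = (β ^ 2) ^ 2 by ring, h6]; rfl
        linarith
      rw [hr'] at h7; ring_nf at h7; omega
  · -- s odd
    set U := 2 * r ^ 2 + s ^ 2 - 2 * a with hU
    set V := 2 * r ^ 2 + s ^ 2 + 2 * a with hV
    have hUV : U * V = 5 * s ^ 4 := by rw [hU, hV]; linear_combination -4 * ha2
    have hsum : U + V = 4 * r ^ 2 + 2 * s ^ 2 := by rw [hU, hV]; ring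
    have hsumpos : 0 < U + V := by rw [hsum]; positivity
    have hprodpos : 0 < U * V := by rw [hUV]; positivity
    have hUpos : 0 < U := pos_of_sum_prod hsumpos hprodpos
    have hVpos : 0 < V := pos_of_mul_pos_right hprodpos hUpos.le
    obtain ⟨s', hs'⟩ : ∃ r', s = 2 * r' + 1 := ⟨s / 2, by omega⟩
    have hc2 : IsCoprime U V := by
      refine isCoprime_of_prime_dvd (by rintro ⟨h, -⟩; omega) ?_
      intro l hl h1 h2
      have h3 : l ∣ s := prime_dvd_of_sq_dvd_five hl (by rw [← hUV, sq]; exact mul_dvd_mul h1 h2)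
      have h4 : l ∣ (2 * r) ^ 2 := by
        have : (2 * r) ^ 2 = U + V - s * (2 * s) := by rw [hsum]; ring
        rw [this]; exact dvd_sub (dvd_add h1 h2) (Dvd.dvd.mul_right h3 _)
      have h5 := hl.dvd_of_dvd_pow h4
      have h2s : IsCoprime (2 : ℤ) s := ⟨-s', 1, by rw [hs']; ring⟩
      rcases hl.dvd_or_dvd h5 with h6 | h6
      · exact hl.not_isUnit (h2s.isUnit_of_dvd' h6 h3)
      · exact hl.not_isUnit (hrsc.isUnit_of_dvd' h6 h3)
    obtain ⟨α, β, h1, h2, h3⟩ := pow4_split5 hc2 hUpos hVpos hUV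
    have hβ : β ≠ 0 := by
      rintro rfl; apply hs0; have : s ^ 2 = 0 := by rw [← h2]; ring
      exact pow_eq_zero_iff (two_ne_zero) |>.1 this
    have hα : α ≠ 0 := by
      rintro rfl; apply hs0; have : s ^ 2 = 0 := by rw [← h2]; ring
      exact pow_eq_zero_iff (two_ne_zero) |>.1 this
    have hsabs : |s| = |α| * |β| := by
      rw [← abs_mul, ← sq_eq_sq_iff_abs_eq_abs]; rw [← h2]; ring
    have hq : α ^ 4 - 2 * α ^ 2 * β ^ 2 + 5 * β ^ 4 = (2 * r) ^ 2 := by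
      rw [hsum, ← h2] at h1; linarith
    have e1 := Int.one_le_abs hα
    have e2 := Int.one_le_abs hr0
    have e3 := Int.one_le_abs hβ
    have fin : α ^ 2 = 1 → β ^ 2 = 1 → a ^ 2 = b ^ 2 := by
      intro h5 h6
      have e4 : α ^ 4 = 1 := by rw [show α ^ 4 = (α ^ 2) ^ 2 by ring, h5]; rfl
      have e5 : β ^ 4 = 1 := by rw [show β ^ 4 = (β ^ 2) ^ 2 by ring, h6]; rfl
      have h7 : r ^ 2 = 1 := by rw [e4, e5, h5] at hq; linarith
      have h8 : s ^ 2 = 1 := by rw [← h2, h5, h6]; rfl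
      rw [ha2, ← hrs]
      rw [show r ^ 4 = (r ^ 2) ^ 2 by ring, show s ^ 4 = (s ^ 2) ^ 2 by ring, h7, h8]; rfl
    by_cases hlt : β.natAbs < N
    · rcases ih α β (2 * r) hlt h3 hq with h | h
      · exact absurd h hβ
      · have h5 := sq_eq_one_of_coprime h3 h
        exact fin h5 (by rw [← h, h5])
    · have hge : |b| ≤ |β| := by
        rw [Int.abs_eq_natAbs, Int.abs_eq_natAbs]; omega
      rw [hbabs, hsabs] at hge
      have hα1 : |α| = 1 := by
        by_contra hne
        have : 2 ≤ |α| := by omega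
        nlinarith [mul_le_mul e2 this (by norm_num) (by positivity)]
      have hr1 : |r| = 1 := by
        by_contra hne
        have : 2 ≤ |r| := by omega
        rw [hα1] at hge
        nlinarith
      have hα2 : α ^ 2 = 1 := by rw [← sq_abs, hα1]; rfl
      have hr2 : r ^ 2 = 1 := by rw [← sq_abs, hr1]; rfl
      refine fin hα2 ?_
      have e4 : α ^ 4 = 1 := by rw [show α ^ 4 = (α ^ 2) ^ 2 by ring, hα2]; rfl
      rw [e4, hα2, mul_pow, hr2] at hq
      have : (β ^ 2 - 1) * (5 * β ^ 2 + 3) = 0 := by linear_combination hq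
      rcases mul_eq_zero.1 this with h | h
      · linarith
      · have := sq_nonneg β
        linarith

/-- rational points on y^2 = x (x^2 - 2 x + 5) -/
lemma ell20_points (x y : ℚ) (h : x * (x ^ 2 - 2 * x + 5) = y ^ 2) : x = 0 ∨ x = 1 ∨ x = 5 := by
  by_cases hx0 : x = 0
  · exact Or.inl hx0
  right
  have hxpos : 0 < x := by
    rcases lt_or_gt_of_ne hx0 with h1 | h1
    · nlinarith [sq_nonneg y, mul_pos (neg_pos.2 h1) (show 0 < x ^ 2 - 2 * x + 5 by nlinarith [sq_nonneg (x - 1)])]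
    · exact h1
  obtain ⟨X, n, hn, hcop, hxe⟩ : ∃ X n : ℤ, 0 < n ∧ IsCoprime X n ∧ x = X / n :=
    ⟨x.num, x.den, by exact_mod_cast x.den_pos,
      Int.isCoprime_iff_nat_coprime.2 (by simpa using x.reduced), (Rat.num_div_den x).symm⟩
  have hnq : (n : ℚ) ≠ 0 := by exact_mod_cast hn.ne'
  have hXpos : 0 < X := by
    rw [hxe] at hxpos
    have : (0 : ℚ) < n := by exact_mod_cast hn
    have := (div_pos_iff_of_pos_right this).1 hxpos
    exact_mod_cast this
  set T : ℤ := X ^ 2 - 2 * X * n + 5 * n ^ 2 with hT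
  have hTpos : 0 < T := by rw [hT]; nlinarith [sq_nonneg (X - n), mul_pos hn hn]
  obtain ⟨Y, hY⟩ : ∃ Y : ℤ, n * (X * T) = Y ^ 2 := by
    have h1 : ((n * (X * T) : ℤ) : ℚ) = (y * n ^ 2) ^ 2 := by
      rw [mul_pow, ← h, hxe, hT]; push_cast; field_simp
    have h2 : IsSquare ((n * (X * T) : ℤ) : ℚ) := ⟨y * n ^ 2, by rw [h1, sq]⟩
    rw [Rat.isSquare_intCast_iff] at h2
    obtain ⟨Y, hY⟩ := h2
    exact ⟨Y, by rw [hY, sq]⟩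
  have hcT : IsCoprime n T := by
    have : T = X ^ 2 + n * (-2 * X + 5 * n) := by rw [hT]; ring
    rw [this]
    exact (IsCoprime.pow_right hcop.symm).add_mul_left_right _
  obtain ⟨b, hb0, hb⟩ := int_pow_left 2 (IsCoprime.mul_right hcop.symm hcT) hn (by positivity) hY
  obtain ⟨Y', hY'0, hY'⟩ := int_pow_left 2 (IsCoprime.mul_right hcop.symm hcT).symm (by positivity) hn
    (by rw [mul_comm]; exact hY)
  have hbne : b ≠ 0 := by rintro rfl; simp [hb] at hn
  by_cases h5 : (5 : ℤ) ∣ X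
  · obtain ⟨X', hX'⟩ := h5
    have hX'pos : 0 < X' := by linarith
    set T' : ℤ := 5 * X' ^ 2 - 2 * X' * n + n ^ 2 with hT'
    have hTT : T = 5 * T' := by rw [hT, hT', hX']; ring
    have h5Y : (5 : ℤ) ∣ Y' := by
      have h5p : Prime (5 : ℤ) := by norm_num
      apply h5p.dvd_of_dvd_pow (n := 2)
      rw [← hY', hX']; exact ⟨X' * T, by ring⟩
    obtain ⟨Y'', hY''⟩ := h5Y
    have hprod : X' * T' = Y'' ^ 2 := by
      rw [hX', hTT, hY''] at hY'; linarith
    have hcX' : IsCoprime X' n := by rw [hX'] at hcop; exact hcop.of_mul_left_right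
    have hc2 : IsCoprime X' T' := by
      have : T' = n ^ 2 + X' * (5 * X' - 2 * n) := by rw [hT']; ring
      rw [this]
      exact (IsCoprime.pow_right hcX').add_mul_left_right _
    have hT'pos : 0 < T' := by linarith
    obtain ⟨a, ha0, ha⟩ := int_pow_left 2 hc2 hX'pos hT'pos hprod
    obtain ⟨z, hz0, hz⟩ := int_pow_left 2 hc2.symm hT'pos hX'pos (by rw [mul_comm]; exact hprod)
    have hcab : IsCoprime b a := by
      rw [ha, hb] at hcX'
      exact ((IsCoprime.pow_iff (by norm_num) (by norm_num)).1 hcX').symm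
    have hane : a ≠ 0 := by rintro rfl; simp [ha] at hX'pos
    rcases quartic_descent (a.natAbs + 1) b a z (by omega) hcab (by rw [← hz, hT', ha, hb]; ring) with h | h
    · exact absurd h hane
    · right
      rw [hxe, hX', ha, hb, h]
      have : (a : ℚ) ≠ 0 := by exact_mod_cast hane
      push_cast; field_simp
  · have hc2 : IsCoprime X T := by
      have : T = 5 * n ^ 2 + X * (X - 2 * n) := by rw [hT]; ring
      rw [this]
      refine IsCoprime.add_mul_left_right (IsCoprime.mul_right ?_ (IsCoprime.pow_right hcop)) _
      have h5p : Prime (5 : ℤ) := by norm_num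
      exact ((h5p.irreducible.coprime_iff_not_dvd).2 h5).symm
    obtain ⟨a, ha0, ha⟩ := int_pow_left 2 hc2 hXpos hTpos hY'
    obtain ⟨z, hz0, hz⟩ := int_pow_left 2 hc2.symm hTpos hXpos (by rw [mul_comm]; exact hY')
    have hcab : IsCoprime a b := by
      rw [ha, hb] at hcop
      exact ((IsCoprime.pow_iff (by norm_num) (by norm_num)).1 hcop)
    rcases quartic_descent (b.natAbs + 1) a b z (by omega) hcab (by rw [← hz, hT, ha, hb]; ring) with h | h
    · exact absurd h hbne
    · left
      rw [hxe, ha, hb, h]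
      have : (b : ℚ) ≠ 0 := by exact_mod_cast hbne
      push_cast; field_simp

end S_nt2

section S_nt3

lemma odd_sq8 {x : ℤ} (h : x % 2 = 1) : ∃ k, x ^ 2 = 8 * k + 1 := by
  obtain ⟨j, rfl⟩ : ∃ j, x = 2 * j + 1 := ⟨x / 2, by omega⟩
  rcases Int.even_or_odd' j with ⟨i, rfl | rfl⟩
  · exact ⟨2 * i ^ 2 + i, by ring⟩
  · exact ⟨2 * i ^ 2 + 3 * i + 1, by ring⟩

lemma even_of_sq_even {x : ℤ} (h : x ^ 2 % 2 = 0) : x % 2 = 0 := by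
  rcases Int.emod_two_eq_zero_or_one x with h1 | h1
  · exact h1
  · obtain ⟨k, hk⟩ := odd_sq8 h1
    omega

lemma mult_one (χ : ℕ → ℤ) (h1 : χ 1 = 1)
    (hm : ∀ a b, a ≠ 0 → b ≠ 0 → χ (a * b) = χ a * χ b) :
    ∀ n : ℕ, n ≠ 0 → (∀ p : ℕ, p.Prime → p ∣ n → χ p = 1) → χ n = 1 := by
  intro n
  induction n using induction_on_primes with
  | zero => intro h; exact absurd rfl h
  | one => intro _ _; exact h1
  | prime_mul p a hp ih =>
    intro h0 hh
    have ha : a ≠ 0 := by rintro rfl; simp at h0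
    rw [hm p a hp.ne_zero ha, hh p hp (dvd_mul_right _ _),
      ih ha (fun q hq hd => hh q hq (Dvd.dvd.mul_left hd p))]
    norm_num

lemma jac_one {p : ℕ} (hp : p.Prime) {D x y : ℤ} (hD : ¬ (p : ℤ) ∣ D) (hy : ¬ (p : ℤ) ∣ y)
    (h : (p : ℤ) ∣ x ^ 2 - D * y ^ 2) : jacobiSym D p = 1 := by
  haveI := Fact.mk hp
  rw [← jacobiSym.legendreSym.to_jacobiSym]
  refine legendreSym.eq_one_of_sq_sub_mul_sq_eq_zero (x := (x : ZMod p)) (y := (y : ZMod p)) ?_ ?_ ?_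
  · rwa [Ne, ZMod.intCast_zmod_eq_zero_iff_dvd]
  · rwa [Ne, ZMod.intCast_zmod_eq_zero_iff_dvd]
  · have := (ZMod.intCast_zmod_eq_zero_iff_dvd (x ^ 2 - D * y ^ 2) p).2 h
    exact_mod_cast this

lemma sq_split {A B f : ℤ} (hA : 0 < A) (h : A * B = f ^ 2) :
    ∃ (k : ℕ) (a b : ℤ), Squarefree k ∧ A = k * a ^ 2 ∧ B = k * b ^ 2 := by
  lift A to ℕ using hA.le
  obtain ⟨k, a, hka, hk⟩ := Nat.sq_mul_squarefree A
  have hA' : (A : ℤ) = k * (a : ℤ) ^ 2 := by rw [← hka]; push_cast; ring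
  have ha : (a : ℤ) ≠ 0 := by rintro h0; rw [h0] at hA'; simp at hA'; omega
  have hk0 : (k : ℤ) ≠ 0 := by rintro h0; rw [h0] at hA'; simp at hA'; omega
  rw [hA'] at h
  have h1 : (a : ℤ) ∣ f := by
    rw [← Int.pow_dvd_pow_iff (n := 2) (by norm_num), ← h]
    exact ⟨k * B, by ring⟩
  obtain ⟨f1, rfl⟩ := h1
  have h2 : (k : ℤ) * B = f1 ^ 2 := by
    have : (a : ℤ) ^ 2 * (k * B) = (a : ℤ) ^ 2 * f1 ^ 2 := by linear_combination h
    exact mul_left_cancel₀ (pow_ne_zero 2 ha) this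
  have h3 : (k : ℤ) ∣ f1 := by
    have : Squarefree (k : ℤ) := Int.squarefree_natCast.2 hk
    rw [← this.dvd_pow_iff_dvd (n := 2) (by norm_num)]
    exact ⟨B, h2.symm⟩
  obtain ⟨b, rfl⟩ := h3
  refine ⟨k, a, b, hk, hA', ?_⟩
  have : (k : ℤ) * B = k * (k * b ^ 2) := by linear_combination h2
  exact mul_left_cancel₀ hk0 this

lemma nt3_even {X e b k : ℤ} (hcop : IsCoprime X e) (hk : k % 2 = 1)
    (hB : X ^ 3 - 108 * e ^ 6 = 2 * k * b ^ 2) : False := by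
  have hX : Even X := by
    have : Even (X ^ 3) := ⟨54 * e ^ 6 + k * b ^ 2, by linarith⟩
    simpa [Int.even_pow] using this
  have he : e % 2 = 1 := by
    rcases Int.emod_two_eq_zero_or_one e with h | h
    · have := hcop.isUnit_of_dvd' hX.two_dvd (by omega : (2 : ℤ) ∣ e)
      rw [Int.isUnit_iff] at this; omega
    · exact h
  obtain ⟨Y, rfl⟩ := hX.two_dvd
  have h1 : 2 * (2 * Y ^ 3 - 27 * e ^ 6) = k * b ^ 2 := by linarith
  have hb : b % 2 = 0 := by
    apply even_of_sq_even
    have : Even (k * b ^ 2) := ⟨2 * Y ^ 3 - 27 * e ^ 6, by linarith⟩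
    rw [Int.even_mul] at this
    rcases this with h | h
    · rw [Int.even_iff] at h; omega
    · exact Int.even_iff.1 h
  obtain ⟨d, rfl⟩ : ∃ d, b = 2 * d := ⟨b / 2, by omega⟩
  have h2 : 2 * Y ^ 3 - 27 * e ^ 6 = 2 * (k * d ^ 2) := by linarith
  have h3 : e ^ 6 % 2 = 1 := Int.odd_iff.1 ((Int.odd_iff.2 he).pow)
  omega

lemma coprime_prime_contra {X e : ℤ} (hcop : IsCoprime X e) {p : ℕ} (hp : p.Prime)
    (h1 : (p : ℤ) ∣ X) (h2 : (p : ℤ) ∣ e) : False := by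
  have := hcop.isUnit_of_dvd' h1 h2
  exact (Nat.prime_iff_prime_int.1 hp).not_isUnit this

lemma jac_mul_sq (u e : ℤ) (n : ℕ) (h : IsCoprime e n) :
    jacobiSym (u * e ^ 2) n = jacobiSym u n := by
  rw [jacobiSym.mul_left, jacobiSym.sq_one' (Int.isCoprime_iff_gcd_eq_one.1 h), mul_one]

lemma mod17 {X e a b s : ℤ} (hcop : IsCoprime X e)
    (hA : (X + 4 * e ^ 2) ^ 2 + 4 * e ^ 4 = 17 * s * a ^ 2)
    (hB : X ^ 3 - 108 * e ^ 6 = 17 * s * b ^ 2) :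
    IsCoprime e ((17 : ℕ) : ℤ) ∧ (X - 5 * e ^ 2) % 17 = 0 := by
  have key : ∀ X e : ZMod 17, (X + 4 * e ^ 2) ^ 2 + 4 * e ^ 4 = 0 → X ^ 3 - 108 * e ^ 6 = 0 →
    X - 5 * e ^ 2 = 0 ∧ (e = 0 → X = 0) := by decide
  have z : (17 : ZMod 17) = 0 := by decide
  have h1 := congrArg (Int.cast : ℤ → ZMod 17) hA
  have h2 := congrArg (Int.cast : ℤ → ZMod 17) hB
  push_cast at h1 h2
  rw [z, zero_mul, zero_mul] at h1 h2
  obtain ⟨h3, h4⟩ := key X e h1 h2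
  constructor
  · refine IsCoprime.symm ?_
    rw [(Nat.prime_iff_prime_int.1 (by norm_num : Nat.Prime 17)).irreducible.coprime_iff_not_dvd]
    intro hd
    have h5 : (e : ZMod 17) = 0 := (ZMod.intCast_zmod_eq_zero_iff_dvd _ 17).2 hd
    exact coprime_prime_contra hcop (by norm_num : Nat.Prime 17)
      ((ZMod.intCast_zmod_eq_zero_iff_dvd _ 17).1 (h4 h5)) hd
  · have : ((X - 5 * e ^ 2 : ℤ) : ZMod 17) = 0 := by exact_mod_cast h3
    have := (ZMod.intCast_zmod_eq_zero_iff_dvd _ 17).1 this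
    omega

lemma prime_int_dvd_two {p : ℕ} (hp : p.Prime) {n : ℕ} (hn : n.Prime) (h : (p : ℤ) ∣ n) : p = n :=
  (Nat.prime_dvd_prime_iff_eq hp hn).1 (Int.natCast_dvd_natCast.1 h)

lemma nt3_85 {X e a b : ℤ} (hX : 0 < X) (hcop : IsCoprime X e)
    (hA : (X + 4 * e ^ 2) ^ 2 + 4 * e ^ 4 = 85 * a ^ 2)
    (hB : X ^ 3 - 108 * e ^ 6 = 85 * b ^ 2) : False := by
  obtain ⟨h1, h2⟩ := mod17 (s := 5) (a := a) (b := b) hcop (by linarith) (by linarith)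
  lift X to ℕ using hX.le
  have hX0 : X ≠ 0 := by omega
  have h3 : jacobiSym X 17 = -1 := by
    rw [jacobiSym.mod_left' (a₁ := (X : ℤ)) (a₂ := 5 * e ^ 2) (by push_cast; omega),
      jac_mul_sq _ _ _ h1]
    norm_num
  have h4 : jacobiSym X 17 = 1 := by
    refine mult_one (fun n => jacobiSym n 17) (by simp) ?_ X hX0 ?_
    · intro u v _ _
      show jacobiSym ((u * v : ℕ) : ℤ) 17 = _
      push_cast
      exact jacobiSym.mul_left _ _ _
    · intro p hp hpX
      show jacobiSym p 17 = 1
      have hpX' : (p : ℤ) ∣ X := Int.natCast_dvd_natCast.2 hpX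
      have hpp := Nat.prime_iff_prime_int.1 hp
      have hpe : ¬ (p : ℤ) ∣ e := fun h => coprime_prime_contra hcop hp hpX' h
      by_cases hp2 : p = 2
      · subst hp2; norm_num
      have hodd : Odd p := hp.odd_of_ne_two hp2
      have hp5 : p ≠ 5 := by
        rintro rfl
        have h5 : ((5 : ℕ) : ℤ) ∣ 108 * e ^ 6 := by
          have : 108 * e ^ 6 = X * X ^ 2 - ((5 : ℕ) : ℤ) * (17 * b ^ 2) := by push_cast; linarith
          rw [this]
          exact dvd_sub (Dvd.dvd.mul_right hpX' _) (dvd_mul_right _ _)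
        rcases hpp.dvd_or_dvd h5 with h6 | h6
        · revert h6; norm_num
        · exact hpe (hpp.dvd_of_dvd_pow h6)
      have hp17 : p ≠ 17 := by
        rintro rfl
        have : jacobiSym X 17 = 0 := by
          rw [jacobiSym.eq_zero_iff]
          refine ⟨by norm_num, ?_⟩
          intro h
          have := Int.isCoprime_iff_gcd_eq_one.2 h
          exact coprime_prime_contra this hp hpX' (dvd_refl _)
        omega
      have hmain : (p : ℤ) ∣ (2 * e ^ 2) ^ 2 - 17 * a ^ 2 := by
        have h5 : (p : ℤ) ∣ ((5 : ℕ) : ℤ) * ((2 * e ^ 2) ^ 2 - 17 * a ^ 2) := by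
          have : ((5 : ℕ) : ℤ) * ((2 * e ^ 2) ^ 2 - 17 * a ^ 2) = X * (-(X + 8 * e ^ 2)) := by
            push_cast; linarith
          rw [this]; exact Dvd.dvd.mul_right hpX' _
        rcases hpp.dvd_or_dvd h5 with h6 | h6
        · exact absurd (prime_int_dvd_two hp (by norm_num) h6) hp5
        · exact h6
      have hpa : ¬ (p : ℤ) ∣ a := by
        intro h
        have h6 : (p : ℤ) ∣ (2 * e ^ 2) ^ 2 := by
          have : (2 * e ^ 2) ^ 2 = ((2 * e ^ 2) ^ 2 - 17 * a ^ 2) + a * (17 * a) := by ring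
          rw [this]; exact dvd_add hmain (Dvd.dvd.mul_right h _)
        have h7 := hpp.dvd_of_dvd_pow h6
        rcases hpp.dvd_or_dvd h7 with h8 | h8
        · exact hp2 (prime_int_dvd_two hp (by norm_num : Nat.Prime 2) (by exact_mod_cast h8))
        · exact hpe (hpp.dvd_of_dvd_pow h8)
      have hJ : jacobiSym ((17 : ℕ) : ℤ) p = 1 :=
        jac_one hp (fun h => hp17 (prime_int_dvd_two hp (by norm_num) h)) hpa
          (by push_cast; exact hmain)
      rwa [jacobiSym.quadratic_reciprocity_one_mod_four (by norm_num) hodd] at hJ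
  omega

lemma nt3_17 {X e a b : ℤ} (hX : 0 < X) (he : 0 < e) (hcop : IsCoprime X e)
    (hA : (X + 4 * e ^ 2) ^ 2 + 4 * e ^ 4 = 17 * a ^ 2)
    (hB : X ^ 3 - 108 * e ^ 6 = 17 * b ^ 2) : False := by
  obtain ⟨h1, h2⟩ := mod17 (s := 1) (a := a) (b := b) hcop (by linarith) (by linarith)
  have hpar : ¬ (X % 2 = 0 ∧ e % 2 = 0) := by
    rintro ⟨h, h'⟩
    exact coprime_prime_contra hcop Nat.prime_two (by push_cast; omega) (by push_cast; omega)
  have h2adic : X % 8 = 1 ∧ e % 2 = 0 := by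
    rcases Int.emod_two_eq_zero_or_one X with hx | hx
    · exfalso
      have he1 : e % 2 = 1 := by omega
      obtain ⟨Y, rfl⟩ : ∃ Y, X = 2 * Y := ⟨X / 2, by omega⟩
      have hb : b % 2 = 0 := by
        apply even_of_sq_even
        have : 17 * b ^ 2 = 2 * (4 * Y ^ 3 - 54 * e ^ 6) := by linarith
        omega
      obtain ⟨d, rfl⟩ : ∃ d, b = 2 * d := ⟨b / 2, by omega⟩
      have h3 : 2 * Y ^ 3 - 27 * e ^ 6 = 17 * d ^ 2 := by linarith
      obtain ⟨k, hk⟩ := odd_sq8 (x := e ^ 3) (Int.odd_iff.1 ((Int.odd_iff.2 he1).pow))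
      have hk' : e ^ 6 = 8 * k + 1 := by rw [← hk]; ring
      have hd : d % 2 = 1 := by
        by_contra h
        have : d ^ 2 % 2 = 0 := Int.even_iff.1 ((Int.even_iff.2 (by omega : d % 2 = 0)).pow_of_ne_zero two_ne_zero)
        omega
      obtain ⟨l, hl⟩ := odd_sq8 hd
      have h4 : Y ^ 3 % 4 = 2 := by omega
      have : Even Y := by
        have : Even (Y ^ 3) := Int.even_iff.2 (by omega)
        simpa [Int.even_pow] using this
      obtain ⟨Z, rfl⟩ := this.two_dvd
      have : (2 * Z) ^ 3 = 8 * Z ^ 3 := by ring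
      omega
    · obtain ⟨k, hk⟩ := odd_sq8 hx
      rcases Int.emod_two_eq_zero_or_one e with he1 | he1
      · refine ⟨?_, he1⟩
        obtain ⟨g, rfl⟩ : ∃ g, e = 2 * g := ⟨e / 2, by omega⟩
        have h3 : X * (8 * k + 1) - 8 * (864 * g ^ 6) = 17 * b ^ 2 := by
          rw [← hk]; linarith
        have hb : b % 2 = 1 := by
          by_contra h
          have : b ^ 2 % 2 = 0 := Int.even_iff.1 ((Int.even_iff.2 (by omega : b % 2 = 0)).pow_of_ne_zero two_ne_zero)
          have : X * (8 * k + 1) = 8 * (X * k) + X := by ring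
          omega
        obtain ⟨l, hl⟩ := odd_sq8 hb
        have : X * (8 * k + 1) = 8 * (X * k) + X := by ring
        omega
      · exfalso
        obtain ⟨l, hl⟩ := odd_sq8 he1
        have h4 : e ^ 4 = 8 * (8 * l ^ 2 + 2 * l) + 1 := by
          have : e ^ 4 = (e ^ 2) ^ 2 := by ring
          rw [this, hl]; ring
        have h3 : X ^ 2 + 8 * (X * e ^ 2) + 20 * e ^ 4 = 17 * a ^ 2 := by linarith
        have ha : a % 2 = 1 := by
          by_contra h
          have : a ^ 2 % 2 = 0 := Int.even_iff.1 ((Int.even_iff.2 (by omega : a % 2 = 0)).pow_of_ne_zero two_ne_zero)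
          omega
        obtain ⟨l, hl⟩ := odd_sq8 ha
        omega
  obtain ⟨hX8, he2⟩ := h2adic
  obtain ⟨N, hN⟩ : ∃ N : ℕ, (N : ℤ) = X + 6 * e ^ 2 :=
    ⟨(X + 6 * e ^ 2).toNat, Int.toNat_of_nonneg (by positivity)⟩
  have hN0 : N ≠ 0 := by rintro rfl; have : 0 < X + 6 * e ^ 2 := by positivity
                         omega
  have hN8 : N % 8 = 1 := by
    obtain ⟨g, rfl⟩ : ∃ g, e = 2 * g := ⟨e / 2, by omega⟩
    have : (N : ℤ) = X + 8 * (3 * g ^ 2) := by rw [hN]; ring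
    omega
  have hNodd : Odd N := Nat.odd_iff.2 (by omega)
  have h3 : jacobiSym N 17 = -1 := by
    rw [jacobiSym.mod_left' (a₁ := (N : ℤ)) (a₂ := 11 * e ^ 2) (by push_cast; omega),
      jac_mul_sq _ _ _ h1]
    norm_num
  have h4 : jacobiSym (-17) N = 1 := by
    refine mult_one (fun n => jacobiSym (-17) n) (by simp) ?_ N hN0 ?_
    · intro u v hu hv
      exact jacobiSym.mul_right' _ hu hv
    · intro p hp hpN
      show jacobiSym (-17) p = 1
      have hpp := Nat.prime_iff_prime_int.1 hp
      have hpN' : (p : ℤ) ∣ X + 6 * e ^ 2 := by rw [← hN]; exact Int.natCast_dvd_natCast.2 hpN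
      have hpe : ¬ (p : ℤ) ∣ e := by
        intro h
        refine coprime_prime_contra hcop hp ?_ h
        have : X = (X + 6 * e ^ 2) - e * (6 * e) := by ring
        rw [this]; exact dvd_sub hpN' (Dvd.dvd.mul_right h _)
      have hp2 : p ≠ 2 := by rintro rfl; omega
      by_cases hp3 : p = 3
      · subst hp3; norm_num
      have hp17 : p ≠ 17 := by
        rintro rfl
        have : jacobiSym N 17 = 0 := by
          rw [jacobiSym.eq_zero_iff]
          refine ⟨by norm_num, ?_⟩
          intro h
          have := Int.isCoprime_iff_gcd_eq_one.2 h
          exact coprime_prime_contra this hp (Int.natCast_dvd_natCast.2 hpN) (dvd_refl _)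
        omega
      have hmain : (p : ℤ) ∣ (18 * e ^ 3) ^ 2 - (-17) * b ^ 2 := by
        have : (18 * e ^ 3) ^ 2 - (-17) * b ^ 2
          = (X + 6 * e ^ 2) * (X ^ 2 - 6 * X * e ^ 2 + 36 * e ^ 4) := by linear_combination -hB
        rw [this]; exact Dvd.dvd.mul_right hpN' _
      have hpb : ¬ (p : ℤ) ∣ b := by
        intro h
        have h6 : (p : ℤ) ∣ (18 * e ^ 3) ^ 2 := by
          have : (18 * e ^ 3) ^ 2 = ((18 * e ^ 3) ^ 2 - (-17) * b ^ 2) + b * (-17 * b) := by ring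
          rw [this]; exact dvd_add hmain (Dvd.dvd.mul_right h _)
        have h7 := hpp.dvd_of_dvd_pow h6
        rcases hpp.dvd_or_dvd h7 with h8 | h8
        · have h9 : (p : ℤ) ∣ ((2 : ℕ) : ℤ) * ((3 : ℕ) : ℤ) ^ 2 := by push_cast; norm_num; exact h8
          rcases hpp.dvd_or_dvd h9 with h8 | h8
          · exact hp2 (prime_int_dvd_two hp (by norm_num) h8)
          · exact hp3 (prime_int_dvd_two hp (by norm_num) (hpp.dvd_of_dvd_pow h8))
        · exact hpe (hpp.dvd_of_dvd_pow h8)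
      refine jac_one hp (fun h => hp17 (prime_int_dvd_two hp (by norm_num) ?_)) hpb hmain
      push_cast
      exact (dvd_neg (b := (17 : ℤ))).1 h
  have h5 : (-17 : ℤ) = (-1) * ((17 : ℕ) : ℤ) := by norm_num
  rw [h5, jacobiSym.mul_left, jacobiSym.at_neg_one hNodd,
    jacobiSym.quadratic_reciprocity_one_mod_four (by norm_num) hNodd, h3,
    ZMod.χ₄_nat_one_mod_four (by omega)] at h4
  norm_num at h4

end S_nt3

section S_nt3b

set_option maxHeartbeats 600000 in
lemma nt3_5 {X e a b : ℤ} (hX : 2 * e ^ 2 < X) (hcop : IsCoprime X e)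
    (hA : (X + 4 * e ^ 2) ^ 2 + 4 * e ^ 4 = 5 * a ^ 2)
    (hB : X ^ 3 - 108 * e ^ 6 = 5 * b ^ 2) : False := by
  have hpar : ¬ (X % 2 = 0 ∧ e % 2 = 0) := by
    rintro ⟨h, h'⟩
    exact coprime_prime_contra hcop Nat.prime_two (by push_cast; omega) (by push_cast; omega)
  -- e is odd
  have he1 : e % 2 = 1 := by
    by_contra hne
    have he0 : e % 2 = 0 := by omega
    have hx : X % 2 = 1 := by omega
    obtain ⟨k, hk⟩ := odd_sq8 hx
    obtain ⟨g, rfl⟩ : ∃ g, e = 2 * g := ⟨e / 2, by omega⟩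
    have h3 : X ^ 2 + 8 * (4 * X * g ^ 2 + 40 * g ^ 4) = 5 * a ^ 2 := by linarith
    have ha : a % 2 = 1 := by
      by_contra h
      have : a ^ 2 % 2 = 0 := Int.even_iff.1 ((Int.even_iff.2 (by omega : a % 2 = 0)).pow_of_ne_zero two_ne_zero)
      omega
    obtain ⟨l, hl⟩ := odd_sq8 ha
    omega
  have he5 : (e : ZMod 5) ≠ 0 ∧ (X : ZMod 5) = 2 * e ^ 2 := by
    have key : ∀ X e : ZMod 5, (X + 4 * e ^ 2) ^ 2 + 4 * e ^ 4 = 0 → X ^ 3 - 108 * e ^ 6 = 0 →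
      X = 2 * e ^ 2 ∧ (e = 0 → X = 0) := by decide
    have z : (5 : ZMod 5) = 0 := by decide
    have h1 := congrArg (Int.cast : ℤ → ZMod 5) hA
    have h2 := congrArg (Int.cast : ℤ → ZMod 5) hB
    push_cast at h1 h2
    rw [z, zero_mul] at h1 h2
    obtain ⟨h3, h4⟩ := key X e h1 h2
    refine ⟨?_, h3⟩
    intro h5
    exact coprime_prime_contra hcop (by norm_num : Nat.Prime 5)
      ((ZMod.intCast_zmod_eq_zero_iff_dvd _ 5).1 (h4 h5))
      ((ZMod.intCast_zmod_eq_zero_iff_dvd _ 5).1 h5)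
  obtain ⟨he5, hX5⟩ := he5
  obtain ⟨m, hm⟩ : ∃ m, X - 2 * e ^ 2 = 5 * m := by
    have : ((X - 2 * e ^ 2 : ℤ) : ZMod 5) = 0 := by push_cast; rw [hX5]; ring
    have := (ZMod.intCast_zmod_eq_zero_iff_dvd _ 5).1 this
    obtain ⟨m, hm⟩ := this
    exact ⟨m, by exact_mod_cast hm⟩
  have hXm : X = 2 * e ^ 2 + 5 * m := by linarith
  have hm0 : 0 < m := by linarith
  have hA' : a ^ 2 = 8 * e ^ 4 + 12 * m * e ^ 2 + 5 * m ^ 2 := by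
    rw [hXm] at hA; linarith
  have hB' : b ^ 2 = -20 * e ^ 6 + 12 * e ^ 4 * m + 30 * e ^ 2 * m ^ 2 + 25 * m ^ 3 := by
    rw [hXm] at hB; linarith
  have hm5 : (m : ZMod 5) = 3 * e ^ 2 := by
    have key : ∀ e m a b : ZMod 5, e ≠ 0 → a ^ 2 = 8 * e ^ 4 + 12 * m * e ^ 2 + 5 * m ^ 2 →
      b ^ 2 = -20 * e ^ 6 + 12 * e ^ 4 * m + 30 * e ^ 2 * m ^ 2 + 25 * m ^ 3 → m = 3 * e ^ 2 := by
      decide +kernel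
    exact key e m a b he5 (by exact_mod_cast congrArg (Int.cast : ℤ → ZMod 5) hA')
      (by exact_mod_cast congrArg (Int.cast : ℤ → ZMod 5) hB')
  have hpe : ∀ p : ℕ, p.Prime → (p : ℤ) ∣ m → ¬ (p : ℤ) ∣ e := by
    intro p hp hpm h
    refine coprime_prime_contra hcop hp ?_ h
    rw [hXm]
    exact dvd_add (Dvd.dvd.mul_left (dvd_pow h two_ne_zero) _) (Dvd.dvd.mul_left hpm _)
  have hp5 : ∀ p : ℕ, p.Prime → (p : ℤ) ∣ m → p ≠ 5 := by
    rintro p hp hpm rfl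
    have h1 := (ZMod.intCast_zmod_eq_zero_iff_dvd _ 5).2 hpm
    rw [hm5] at h1
    have : ∀ e : ZMod 5, 3 * e ^ 2 = 0 → e = 0 := by decide
    exact he5 (this _ h1)
  obtain ⟨l, hl⟩ := odd_sq8 he1
  rcases Int.emod_two_eq_zero_or_one X with hx | hx
  · -- X even
    obtain ⟨Y, rfl⟩ : ∃ Y, X = 2 * Y := ⟨X / 2, by omega⟩
    have hb : b % 2 = 0 := by
      apply even_of_sq_even
      have : 5 * b ^ 2 = 2 * (4 * Y ^ 3 - 54 * e ^ 6) := by linarith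
      omega
    obtain ⟨d, rfl⟩ : ∃ d, b = 2 * d := ⟨b / 2, by omega⟩
    have h3 : 2 * Y ^ 3 - 27 * e ^ 6 = 5 * d ^ 2 := by linarith
    obtain ⟨k, hk⟩ := odd_sq8 (x := e ^ 3) (Int.odd_iff.1 ((Int.odd_iff.2 he1).pow))
    have hk' : e ^ 6 = 8 * k + 1 := by rw [← hk]; ring
    have hd : d % 2 = 1 := by
      by_contra h
      have : d ^ 2 % 2 = 0 := Int.even_iff.1 ((Int.even_iff.2 (by omega : d % 2 = 0)).pow_of_ne_zero two_ne_zero)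
      omega
    obtain ⟨l2, hl2⟩ := odd_sq8 hd
    have h4 : Y ^ 3 % 4 = 0 := by omega
    have hYe : Even Y := by
      have : Even (Y ^ 3) := Int.even_iff.2 (by omega)
      simpa [Int.even_pow] using this
    obtain ⟨Z, hZ⟩ := hYe.two_dvd
    have ha : a % 2 = 0 := by
      apply even_of_sq_even
      have : 5 * a ^ 2 = 2 * (8 * (Z + e ^ 2) ^ 2 + 2 * e ^ 4) := by rw [hZ] at hA; linarith
      omega
    obtain ⟨a1, rfl⟩ : ∃ d, a = 2 * d := ⟨a / 2, by omega⟩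
    have h5 : 4 * (Z + e ^ 2) ^ 2 + e ^ 4 = 5 * a1 ^ 2 := by rw [hZ] at hA; linarith
    have h6 : e ^ 4 = 8 * (8 * l ^ 2 + 2 * l) + 1 := by
      have : e ^ 4 = (e ^ 2) ^ 2 := by ring
      rw [this, hl]; ring
    have ha1 : a1 % 2 = 1 := by
      by_contra h
      have : a1 ^ 2 % 2 = 0 := Int.even_iff.1 ((Int.even_iff.2 (by omega : a1 % 2 = 0)).pow_of_ne_zero two_ne_zero)
      omega
    obtain ⟨l3, hl3⟩ := odd_sq8 ha1
    have hZ2 : Z % 2 = 0 := by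
      by_contra h
      have h7 : (Z + e ^ 2) ^ 2 % 2 = 0 :=
        Int.even_iff.1 ((Int.even_iff.2 (by omega : (Z + e ^ 2) % 2 = 0)).pow_of_ne_zero two_ne_zero)
      omega
    obtain ⟨N, hN⟩ : ∃ N : ℕ, m = 2 * N := by
      clear * - hXm hl hZ hZ2 hm0
      exact ⟨(m / 2).toNat, by omega⟩
    have hN0 : N ≠ 0 := by clear * - hN hm0; rintro rfl; omega
    have hN4 : N % 4 = 3 := by clear * - hXm hN hl hZ hZ2; omega
    have hNodd : Odd N := Nat.odd_iff.2 (by clear * - hN4; omega)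
    have h7 : jacobiSym N 5 = 1 := by
      have hcop5 : IsCoprime e ((5 : ℕ) : ℤ) := by
        refine IsCoprime.symm ?_
        rw [(Nat.prime_iff_prime_int.1 (by norm_num : Nat.Prime 5)).irreducible.coprime_iff_not_dvd]
        intro h
        exact he5 ((ZMod.intCast_zmod_eq_zero_iff_dvd _ 5).2 h)
      have h8 : ((N - (-1) * e ^ 2 : ℤ) : ZMod 5) = 0 := by
        rw [hN] at hm5
        push_cast at hm5 ⊢
        revert hm5
        generalize (N : ZMod 5) = u
        generalize (e : ZMod 5) = v
        revert u v
        decide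
      have h9 := (ZMod.intCast_zmod_eq_zero_iff_dvd _ 5).1 h8
      push_cast at h9
      rw [jacobiSym.mod_left' (a₁ := (N : ℤ)) (a₂ := (-1) * e ^ 2) (by clear * - h9; push_cast; omega),
        jac_mul_sq _ _ _ hcop5]
      norm_num
    have h8 : jacobiSym (-5) N = 1 := by
      refine mult_one (fun n => jacobiSym (-5) n) (by simp) ?_ N hN0 ?_
      · intro u v hu hv
        exact jacobiSym.mul_right' _ hu hv
      · intro p hp hpN
        show jacobiSym (-5) p = 1
        have hpp := Nat.prime_iff_prime_int.1 hp
        have hpm : (p : ℤ) ∣ m := by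
          rw [hN]; exact Dvd.dvd.mul_left (Int.natCast_dvd_natCast.2 hpN) _
        have hp2 : p ≠ 2 := by clear * - hpN hN4; rintro rfl; omega
        have hmain : (p : ℤ) ∣ (2 * d) ^ 2 - (-5) * (2 * e ^ 3) ^ 2 := by
          have : (2 * d) ^ 2 - (-5) * (2 * e ^ 3) ^ 2
            = m * (12 * e ^ 4 + 30 * e ^ 2 * m + 25 * m ^ 2) := by linear_combination hB'
          rw [this]; exact Dvd.dvd.mul_right hpm _
        refine jac_one hp (fun h => hp5 p hp hpm (prime_int_dvd_two hp (by norm_num) ?_)) ?_ hmain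
        · push_cast
          exact (dvd_neg (b := (5 : ℤ))).1 h
        · intro h
          rcases hpp.dvd_or_dvd h with h1 | h1
          · exact hp2 (prime_int_dvd_two hp (by norm_num : Nat.Prime 2) (by exact_mod_cast h1))
          · exact hpe p hp hpm (hpp.dvd_of_dvd_pow h1)
    have h5 : (-5 : ℤ) = (-1) * ((5 : ℕ) : ℤ) := by norm_num
    rw [h5, jacobiSym.mul_left, jacobiSym.at_neg_one hNodd,
      jacobiSym.quadratic_reciprocity_one_mod_four (by norm_num) hNodd, h7,
      ZMod.χ₄_nat_three_mod_four hN4] at h8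
    norm_num at h8
  · -- X odd
    obtain ⟨k, hk⟩ := odd_sq8 hx
    obtain ⟨j, hj⟩ := odd_sq8 (x := e ^ 3) (Int.odd_iff.1 ((Int.odd_iff.2 he1).pow))
    have h3 : X * (8 * k + 1) - 108 * (8 * j + 1) = 5 * b ^ 2 := by
      rw [← hk, ← hj]; linarith
    have h4 : X * (8 * k + 1) = 8 * (X * k) + X := by ring
    have hb : b % 2 = 1 := by
      by_contra h
      have : b ^ 2 % 2 = 0 := Int.even_iff.1 ((Int.even_iff.2 (by omega : b % 2 = 0)).pow_of_ne_zero two_ne_zero)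
      omega
    obtain ⟨l2, hl2⟩ := odd_sq8 hb
    have hX8 : X % 8 = 1 := by omega
    lift m to ℕ using hm0.le
    have hm8 : m % 8 = 3 := by clear * - hXm hl hX8; omega
    have hmodd : Odd m := Nat.odd_iff.2 (by clear * - hm8; omega)
    have h8 : jacobiSym 2 m = 1 := by
      refine mult_one (fun n => jacobiSym 2 n) (by simp) ?_ m (by omega) ?_
      · intro u v hu hv
        exact jacobiSym.mul_right' _ hu hv
      · intro p hp hpm'
        show jacobiSym 2 p = 1
        have hpp := Nat.prime_iff_prime_int.1 hp
        have hpm : (p : ℤ) ∣ m := Int.natCast_dvd_natCast.2 hpm'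
        have hp2 : ¬ (p : ℤ) ∣ 2 := by
          intro h
          have := (prime_int_dvd_two hp (by norm_num : Nat.Prime 2) (by exact_mod_cast h))
          clear * - this hpm' hm8; subst this; omega
        refine jac_one hp (x := a) (y := 2 * e ^ 2) hp2 ?_ ?_
        · intro h
          rcases hpp.dvd_or_dvd h with h1 | h1
          · exact hp2 h1
          · exact hpe p hp hpm (hpp.dvd_of_dvd_pow h1)
        · have : a ^ 2 - 2 * (2 * e ^ 2) ^ 2 = m * (12 * e ^ 2 + 5 * m) := by
            linear_combination hA'
          rw [this]; exact Dvd.dvd.mul_right hpm _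
    rw [jacobiSym.at_two hmodd, ZMod.χ₈_nat_mod_eight, hm8] at h8
    revert h8; decide

lemma nt3_int {X e f : ℤ} (he : 0 < e) (hcop : IsCoprime X e)
    (h : ((X + 4 * e ^ 2) ^ 2 + 4 * e ^ 4) * (X ^ 3 - 108 * e ^ 6) = f ^ 2)
    (hB0 : X ^ 3 - 108 * e ^ 6 ≠ 0) : False := by
  have hApos : 0 < (X + 4 * e ^ 2) ^ 2 + 4 * e ^ 4 := by positivity
  have hBpos : 0 < X ^ 3 - 108 * e ^ 6 := by
    refine lt_of_le_of_ne ?_ hB0.symm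
    by_contra hneg
    push Not at hneg
    nlinarith [sq_nonneg f]
  have hXbig : 2 * e ^ 2 < X := by
    by_contra hle
    push Not at hle
    have : X ^ 3 ≤ (2 * e ^ 2) ^ 3 := Odd.strictMono_pow (by decide : Odd 3) |>.monotone hle
    have h6 : 0 < e ^ 6 := by positivity
    nlinarith
  have hXpos : 0 < X := lt_trans (by positivity) hXbig
  obtain ⟨k, a, b, hk, hA, hB⟩ := sq_split hApos h
  have hcopk : IsCoprime (k : ℤ) e := by
    have h1 : IsCoprime ((X + 4 * e ^ 2) ^ 2 + 4 * e ^ 4) e := by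
      have : (X + 4 * e ^ 2) ^ 2 + 4 * e ^ 4 = X ^ 2 + e * (8 * X * e + 20 * e ^ 3) := by ring
      rw [this]
      exact (hcop.pow_left (m := 2)).add_mul_left_left _
    rw [hA] at h1
    exact h1.of_mul_left_left
  have hk5780 : (k : ℤ) ∣ 5780 * e ^ 8 := by
    have : 5780 * e ^ 8 = k * (a ^ 2 * (484 * e ^ 4 + (-11 * X - 75 * e ^ 2) * (8 * e ^ 2 - X))
        + b ^ 2 * (-11 * X - 75 * e ^ 2)) := by
      linear_combination (484 * e ^ 4 + (-11 * X - 75 * e ^ 2) * (8 * e ^ 2 - X)) * hA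
        + (-11 * X - 75 * e ^ 2) * hB
    rw [this]; exact dvd_mul_right _ _
  have hk1 : (k : ℤ) ∣ 5780 := (hcopk.pow_right (n := 8)).dvd_of_dvd_mul_right hk5780
  have hk2 : k ∣ 170 := by
    have h1 : k ∣ 5780 := by exact_mod_cast hk1
    rw [← hk.dvd_pow_iff_dvd (n := 2) two_ne_zero]
    exact dvd_trans h1 (by norm_num)
  have hk3 : k ∈ Nat.divisors 170 := Nat.mem_divisors.2 ⟨hk2, by norm_num⟩
  have hdiv : Nat.divisors 170 = {1, 2, 5, 10, 17, 34, 85, 170} := by decide +kernel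
  rw [hdiv] at hk3
  simp only [Finset.mem_insert, Finset.mem_singleton] at hk3
  rcases hk3 with rfl | rfl | rfl | rfl | rfl | rfl | rfl | rfl <;> push_cast at hA hB
  · apply no_pts_108 (X / e ^ 2) (b / e ^ 3)
    have he0 : (e : ℚ) ≠ 0 := by exact_mod_cast he.ne'
    have hBq : (X : ℚ) ^ 3 - 108 * e ^ 6 = b ^ 2 := by exact_mod_cast hB.trans (one_mul _)
    field_simp
    linear_combination -hBq
  · exact nt3_even (k := 1) (b := b) hcop (by norm_num) (by linarith)
  · exact nt3_5 hXbig hcop hA hB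
  · exact nt3_even (k := 5) (b := b) hcop (by norm_num) (by linarith)
  · exact nt3_17 hXpos he hcop hA hB
  · exact nt3_even (k := 17) (b := b) hcop (by norm_num) (by linarith)
  · exact nt3_85 hXpos hcop hA hB
  · exact nt3_even (k := 85) (b := b) hcop (by norm_num) (by linarith)

/-- The genus two curve has no rational points. -/
lemma no_pts_genus2 (x y : ℚ) : ((x + 4) ^ 2 + 4) * (x ^ 3 - 108) ≠ y ^ 2 := by
  intro h
  have hB0 : x ^ 3 - 108 ≠ 0 := fun h0 => no_pts_108 x 0 (by rw [h0]; norm_num)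
  set X := x.num with hXdef
  obtain ⟨n, hn⟩ : ∃ n : ℤ, n = x.den := ⟨_, rfl⟩
  have hnpos : 0 < n := by rw [hn]; exact_mod_cast x.den_pos
  have hnq : (n : ℚ) ≠ 0 := by exact_mod_cast hnpos.ne'
  have hx : x * n = X := by rw [hn]; push_cast; exact Rat.mul_den_eq_num x
  have hcop : IsCoprime X n := by
    rw [Int.isCoprime_iff_gcd_eq_one, hn]
    exact x.reduced
  have hBq : ((X ^ 3 - 108 * n ^ 3 : ℤ) : ℚ) = n ^ 3 * (x ^ 3 - 108) := by
    push_cast; rw [← hx]; ring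
  have hBne : X ^ 3 - 108 * n ^ 3 ≠ 0 := by
    intro h0
    rw [h0] at hBq
    have : (n : ℚ) ^ 3 * (x ^ 3 - 108) ≠ 0 := mul_ne_zero (pow_ne_zero 3 hnq) hB0
    exact this (by rw [← hBq]; norm_num)
  have hsq : (((n * (((X + 4 * n) ^ 2 + 4 * n ^ 2) * (X ^ 3 - 108 * n ^ 3)) : ℤ)) : ℚ)
      = (n ^ 3 * y) ^ 2 := by
    push_cast; rw [← hx]; linear_combination (n : ℚ) ^ 6 * h
  have hint : IsIntegral ℤ ((n : ℚ) ^ 3 * y) := by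
    refine IsIntegral.of_pow (n := 2) (by norm_num) ?_
    rw [← hsq]; exact isIntegral_algebraMap
  obtain ⟨z, hz⟩ := IsIntegrallyClosed.isIntegral_iff.1 hint
  have hz' : (z : ℚ) = n ^ 3 * y := hz
  rw [← hz'] at hsq
  have hsqi : n * (((X + 4 * n) ^ 2 + 4 * n ^ 2) * (X ^ 3 - 108 * n ^ 3)) = z ^ 2 := by
    exact_mod_cast hsq
  have hABcop : IsCoprime n (((X + 4 * n) ^ 2 + 4 * n ^ 2) * (X ^ 3 - 108 * n ^ 3)) := by
    have : ((X + 4 * n) ^ 2 + 4 * n ^ 2) * (X ^ 3 - 108 * n ^ 3)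
      = X ^ 5 + n * ((8 * X + 20 * n) * X ^ 3 - 108 * n ^ 2 * (X ^ 2 + 8 * X * n + 20 * n ^ 2)) := by
      ring
    rw [this]
    exact (hcop.symm.pow_right (n := 5)).add_mul_left_right _
  have hApos : 0 < (X + 4 * n) ^ 2 + 4 * n ^ 2 := by positivity
  have hABpos : 0 < ((X + 4 * n) ^ 2 + 4 * n ^ 2) * (X ^ 3 - 108 * n ^ 3) := by
    refine lt_of_le_of_ne ?_ (mul_ne_zero hApos.ne' hBne).symm
    by_contra hneg
    push Not at hneg
    nlinarith [sq_nonneg z]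
  obtain ⟨e, he, hne⟩ := int_pow_left 2 hABcop hnpos hABpos hsqi
  obtain ⟨f, -, hf⟩ := int_pow_left 2 hABcop.symm hABpos hnpos (by rw [mul_comm]; exact hsqi)
  have he0 : 0 < e := by
    refine lt_of_le_of_ne he ?_
    rintro rfl; simp at hne; omega
  rw [hne] at hf hBne hcop
  refine nt3_int (X := X) (e := e) (f := f) he0 ?_ ?_ ?_
  · exact (IsCoprime.pow_right_iff (by norm_num)).1 hcop
  · rw [← hf]; ring
  · intro h0; apply hBne; rw [← h0]; ring

end S_nt3b

section S_grp

open Equiv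

/-- sign character of `ZMod 2` -/
def chi2 (x : ZMod 2) : ℤ := if x = 0 then 1 else -1

lemma chi2_add : ∀ x y : ZMod 2, chi2 (x + y) = chi2 x * chi2 y := by decide

/-- the rotation -/
def rot3 : Perm (Fin 3) := finRotate 3

lemma grp_core (Q : Perm (Fin 3) → (Fin 3 → ZMod 2) → Prop)
    (mul : ∀ σ' s' σ s, Q σ' s' → Q σ s → Q (σ' * σ) (fun i => s i + s' (σ i)))
    (inv : ∀ σ s, Q σ s → Q σ⁻¹ (fun i => s (σ⁻¹ i)))
    (hr : Q rot3 0)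
    (hE : ∃ σ s, Q σ s ∧ ¬ ∃ ε, ∀ i, s i = ε)
    (hC : ∃ σ s, Q σ s ∧ Perm.sign σ = 1 ∧ s 0 + s 1 + s 2 = 1) :
    ∀ v, Q 1 v := by
  have hr' := inv _ _ hr
  have step1 : ∃ v : Fin 3 → ZMod 2, Q 1 v ∧ v 0 + v 1 + v 2 = 0 ∧ v ≠ 0 := by
    obtain ⟨σ, s, hQ, hs⟩ := hE
    have hQ' := inv _ _ hQ
    have h1 := mul _ _ _ _ (mul _ _ _ _ hQ hr) hQ'
    have h2 := mul _ _ _ _ h1 hr'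
    have h3 := mul _ _ _ _ h1 hr
    have key : ∀ (σ : Perm (Fin 3)) (s : Fin 3 → ZMod 2), (¬ ∃ ε, ∀ i, s i = ε) →
        ((σ * rot3 * σ⁻¹ * rot3⁻¹ = 1) ∧
          ∃ v : Fin 3 → ZMod 2, (v = fun i => (0 : Fin 3 → ZMod 2) (rot3⁻¹ i) +
          ((fun i => s (σ⁻¹ i) + ((0 : Fin 3 → ZMod 2) (σ⁻¹ i) + s (rot3 (σ⁻¹ i)))) (rot3⁻¹ i))) ∧
            v 0 + v 1 + v 2 = 0 ∧ v ≠ 0) ∨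
        ((σ * rot3 * σ⁻¹ * rot3 = 1) ∧
          ∃ v : Fin 3 → ZMod 2, (v = fun i => (0 : Fin 3 → ZMod 2) i +
          ((fun i => s (σ⁻¹ i) + ((0 : Fin 3 → ZMod 2) (σ⁻¹ i) + s (rot3 (σ⁻¹ i)))) (rot3 i))) ∧
            v 0 + v 1 + v 2 = 0 ∧ v ≠ 0) := by decide +kernel
    rcases key σ s hs with ⟨h4, v, hv, h5, h6⟩ | ⟨h4, v, hv, h5, h6⟩
    · rw [h4] at h2
      exact ⟨v, by rw [hv]; exact h2, h5, h6⟩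
    · rw [h4] at h3
      exact ⟨v, by rw [hv]; exact h3, h5, h6⟩
  have add : ∀ u v, Q 1 u → Q 1 v → Q 1 (u + v) := by
    intro u v hu hv
    have := mul _ _ _ _ hu hv
    have e : (fun i => v i + u ((1 : Perm (Fin 3)) i)) = u + v := by
      funext i; simp [add_comm]
    rw [one_mul, e] at this
    exact this
  have conj : ∀ v, Q 1 v → Q 1 (fun i => v (rot3 i)) := by
    intro v hv
    have h1 := mul _ _ _ _ hr' (mul _ _ _ _ hv hr)
    have e : (fun i => (0 : Fin 3 → ZMod 2) i + v (rot3 i) +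
      (0 : Fin 3 → ZMod 2) (rot3⁻¹ ((1 * rot3 : Perm (Fin 3)) i))) = fun i => v (rot3 i) := by
      funext i; simp
    rw [one_mul, inv_mul_cancel] at h1
    simpa using h1
  obtain ⟨w, hw, hw1⟩ : ∃ w, Q 1 w ∧ w 0 + w 1 + w 2 = 1 := by
    obtain ⟨σ, s, hQ, hσ, hs⟩ := hC
    have h2 := mul _ _ _ _ hQ (mul _ _ _ _ hQ hQ)
    have key : ∀ σ : Perm (Fin 3), Perm.sign σ = 1 → σ = 1 ∨ σ = rot3 ∨ σ = rot3⁻¹ := by decide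
    rcases key σ hσ with rfl | rfl | rfl
    · exact ⟨s, hQ, hs⟩
    · have e : rot3 * (rot3 * rot3) = 1 := by decide
      rw [e] at h2
      refine ⟨_, h2, ?_⟩
      revert hs
      generalize hs' : s = s'
      clear * -
      revert s'
      decide
    · have e : rot3⁻¹ * (rot3⁻¹ * rot3⁻¹) = 1 := by decide
      rw [e] at h2
      refine ⟨_, h2, ?_⟩
      revert hs
      generalize hs' : s = s'
      clear * -
      revert s'
      decide
  obtain ⟨v, hv, hv0, hvne⟩ := step1
  have c1 := conj v hv
  have c2 := conj _ c1
  have zero := add v v hv hv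
  have s1 := add _ _ zero hw
  have s2 := add _ _ hv hw
  have s3 := add _ _ c1 hw
  have s4 := add _ _ c2 hw
  have key : ∀ v : Fin 3 → ZMod 2, v 0 + v 1 + v 2 = 0 → v ≠ 0 → ∀ w, w 0 + w 1 + w 2 = 1 →
    ∀ x : Fin 3 → ZMod 2, x ∈ [v, fun i => v (rot3 i), fun i => v (rot3 (rot3 i)),
      v + v, v + v + w, v + w, (fun i => v (rot3 i)) + w, (fun i => v (rot3 (rot3 i))) + w] := by
    decide +kernel
  intro x
  have hx := key v hv0 hvne w hw1 x
  simp only [List.mem_cons, List.not_mem_nil, or_false] at hx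
  rcases hx with h | h | h | h | h | h | h | h <;> rw [h] <;> assumption

lemma grp2 (Q : Perm (Fin 3) → (Fin 3 → ZMod 2) → Prop)
    (mul : ∀ σ' s' σ s, Q σ' s' → Q σ s → Q (σ' * σ) (fun i => s i + s' (σ i)))
    (inv : ∀ σ s, Q σ s → Q σ⁻¹ (fun i => s (σ⁻¹ i)))
    (hA : ∀ i, ∃ σ s, Q σ s ∧ σ i ≠ i)
    (hB : ∃ σ s, Q σ s ∧ Perm.sign σ ≠ 1)
    (hC : ∃ σ s, Q σ s ∧ s 0 + s 1 + s 2 ≠ 0)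
    (hD : ∃ σ s, Q σ s ∧ (Perm.sign σ : ℤ) * chi2 (s 0 + s 1 + s 2) ≠ 1)
    (hE : ∀ η : Fin 3 → ZMod 2, ∃ σ s, Q σ s ∧ ¬ ∃ ε, ∀ i, η (σ i) = η i + s i + ε) :
    (∀ v, Q 1 v) ∧ ∀ σ, ∃ s, Q σ s := by
  obtain ⟨s, hs⟩ : ∃ s, Q rot3 s := by
    choose f g hQ hf using hA
    have key : ∀ x y z : Perm (Fin 3), x 0 ≠ 0 → y 1 ≠ 1 → z 2 ≠ 2 →
      x = rot3 ∨ y = rot3 ∨ z = rot3 ∨ x⁻¹ = rot3 ∨ y⁻¹ = rot3 ∨ z⁻¹ = rot3 ∨ x * y = rot3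
      ∨ y * x = rot3 ∨ x * z = rot3 ∨ z * x = rot3 := by decide +kernel
    have h0 := hQ 0
    have h1 := hQ 1
    have h2 := hQ 2
    have h0' := inv _ _ h0
    have h1' := inv _ _ h1
    have h2' := inv _ _ h2
    have h01 := mul _ _ _ _ h0 h1
    have h10 := mul _ _ _ _ h1 h0
    have h02 := mul _ _ _ _ h0 h2
    have h20 := mul _ _ _ _ h2 h0
    rcases key (f 0) (f 1) (f 2) (hf 0) (hf 1) (hf 2) with h | h | h | h | h | h | h | h | h | h
    · rw [h] at h0; exact ⟨_, h0⟩
    · rw [h] at h1; exact ⟨_, h1⟩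
    · rw [h] at h2; exact ⟨_, h2⟩
    · rw [h] at h0'; exact ⟨_, h0'⟩
    · rw [h] at h1'; exact ⟨_, h1'⟩
    · rw [h] at h2'; exact ⟨_, h2'⟩
    · rw [h] at h01; exact ⟨_, h01⟩
    · rw [h] at h10; exact ⟨_, h10⟩
    · rw [h] at h02; exact ⟨_, h02⟩
    · rw [h] at h20; exact ⟨_, h20⟩
  -- square of the square
  have hs2 := mul _ _ _ _ hs hs
  have hs4 := mul _ _ _ _ hs2 hs2
  obtain ⟨η, hη⟩ : ∃ η : Fin 3 → ZMod 2, ∀ i, (fun i => (s i + s (rot3 i)) +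
      (s ((rot3 * rot3) i) + s (rot3 ((rot3 * rot3) i)))) i = η i + η (rot3 i) := by
    clear * -
    revert s
    decide +kernel
  have e4 : rot3 * rot3 * (rot3 * rot3) = rot3 := by decide
  rw [e4] at hs4
  have two : ∀ x y : ZMod 2, x + y + y = x := by decide
  have twist : ∀ v, Q 1 v := by
    have hcore := grp_core (fun σ s => Q σ (fun i => s i + η i + η (σ i))) ?_ ?_ ?_ ?_ ?_
    · intro v
      have := hcore v
      simp only [Perm.one_apply, two] at this
      exact this
    · intro σ' s' σ s h' h
      have := mul _ _ _ _ h' h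
      convert this using 1
      funext i
      simp only [Perm.mul_apply]
      generalize s i = a, η i = b, η (σ i) = c, s' (σ i) = d, η (σ' (σ i)) = e
      revert a b c d e
      decide
    · intro σ s h
      have := inv _ _ h
      convert this using 1
      funext i
      rw [show σ (σ⁻¹ i) = i from σ.apply_symm_apply i]
      ring
    · convert hs4 using 1
      funext i
      have := hη i
      simp only [Pi.zero_apply, zero_add]
      exact this.symm
    · obtain ⟨σ, u, hQ, hne⟩ := hE η
      refine ⟨σ, fun i => u i + η i + η (σ i), ?_, ?_⟩
      · have : (fun i => u i + η i + η (σ i) + η i + η (σ i)) = u := by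
          funext i
          generalize u i = a, η i = b, η (σ i) = c
          revert a b c
          decide
        rw [this]; exact hQ
      · rintro ⟨ε, hε⟩
        refine hne ⟨ε, fun i => ?_⟩
        have := hε i
        simp only at this
        clear hε
        revert this
        generalize u i = a, η i = b, η (σ i) = c
        revert a b c ε
        decide
    · -- even element with odd sum
      have hcomb : ∃ σ u, Q σ u ∧ Perm.sign σ = 1 ∧ u 0 + u 1 + u 2 = 1 := by
        obtain ⟨σ, u, hQ, hu⟩ := hC
        obtain ⟨σ', u', hQ', hu'⟩ := hD
        have hu1 : u 0 + u 1 + u 2 = 1 := by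
          revert hu; generalize u 0 + u 1 + u 2 = x; revert x; decide
        rcases Int.units_eq_one_or (Perm.sign σ) with h1 | h1
        · exact ⟨σ, u, hQ, h1, hu1⟩
        rcases Int.units_eq_one_or (Perm.sign σ') with h2 | h2
        · refine ⟨σ', u', hQ', h2, ?_⟩
          rw [h2] at hu'
          revert hu'; generalize u' 0 + u' 1 + u' 2 = x; revert x; decide
        · refine ⟨σ' * σ, _, mul _ _ _ _ hQ' hQ, by rw [map_mul, h1, h2]; rfl, ?_⟩
          rw [h2] at hu'
          have h3 : u' 0 + u' 1 + u' 2 = 0 := by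
            revert hu'; generalize u' 0 + u' 1 + u' 2 = x; revert x; decide
          have h4 : u' (σ 0) + u' (σ 1) + u' (σ 2) = u' 0 + u' 1 + u' 2 := by
            have := Equiv.sum_comp σ u'
            rwa [Fin.sum_univ_three, Fin.sum_univ_three] at this
          linear_combination hu1 + h3 + h4
      obtain ⟨σ, u, hQ, h1, h2⟩ := hcomb
      refine ⟨σ, fun i => u i + η i + η (σ i), ?_, h1, ?_⟩
      · have : (fun i => u i + η i + η (σ i) + η i + η (σ i)) = u := by
          funext i
          generalize u i = a, η i = b, η (σ i) = c
          revert a b c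
          decide
        rw [this]; exact hQ
      · have h4 : η (σ 0) + η (σ 1) + η (σ 2) = η 0 + η 1 + η 2 := by
          have := Equiv.sum_comp σ η
          rwa [Fin.sum_univ_three, Fin.sum_univ_three] at this
        have h5 : ∀ x : ZMod 2, x + x = 0 := by decide
        linear_combination h2 + h4 + h5 (η 0) + h5 (η 1) + h5 (η 2)
  refine ⟨twist, ?_⟩
  intro σ
  obtain ⟨τ, u, hQ, hτ⟩ := hB
  have h1 := inv _ _ hs
  have h2 := mul _ _ _ _ hs hQ
  have h3 := mul _ _ _ _ h1 hQ
  have key : ∀ τ : Perm (Fin 3), Perm.sign τ ≠ 1 → ∀ σ, σ = 1 ∨ σ = rot3 ∨ σ = rot3⁻¹ ∨ σ = τ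
    ∨ σ = rot3 * τ ∨ σ = rot3⁻¹ * τ := by decide
  rcases key τ hτ σ with rfl | rfl | rfl | rfl | rfl | rfl
  · exact ⟨0, twist 0⟩
  · exact ⟨_, hs⟩
  · exact ⟨_, h1⟩
  · exact ⟨_, hQ⟩
  · exact ⟨_, h2⟩
  · exact ⟨_, h3⟩

end S_grp

section S_grp4

open Equiv

/-- reduction mod 2 -/
def red : ZMod 4 →+* ZMod 2 := ZMod.castHom (by norm_num : 2 ∣ 4) (ZMod 2)

lemma grp4 (Q : Perm (Fin 3) → (Fin 3 → ZMod 4) → Prop)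
    (mul : ∀ σ' s' σ s, Q σ' s' → Q σ s → Q (σ' * σ) (fun i => s i + s' (σ i)))
    (inv : ∀ σ s, Q σ s → Q σ⁻¹ (fun i => - s (σ⁻¹ i)))
    (hA : ∀ i, ∃ σ a, Q σ a ∧ σ i ≠ i)
    (hB : ∃ σ a, Q σ a ∧ Perm.sign σ ≠ 1)
    (hC : ∃ σ a, Q σ a ∧ red (a 0) + red (a 1) + red (a 2) ≠ 0)
    (hD : ∃ σ a, Q σ a ∧ (Perm.sign σ : ℤ) * chi2 (red (a 0) + red (a 1) + red (a 2)) ≠ 1)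
    (hE : ∀ η : Fin 3 → ZMod 2, ∃ σ a, Q σ a ∧ ¬ ∃ ε, ∀ i, η (σ i) = η i + red (a i) + ε) :
    ∀ σ a, Q σ a := by
  have hh := by
    refine grp2 (fun σ s => ∃ a, Q σ a ∧ (fun i => red (a i)) = s) ?_ ?_ ?_ ?_ ?_ ?_ ?_
    · rintro σ' s' σ s ⟨a', hQ', rfl⟩ ⟨a, hQ, rfl⟩
      exact ⟨_, mul _ _ _ _ hQ' hQ, by funext i; simp⟩
    · rintro σ s ⟨a, hQ, rfl⟩
      have key : ∀ x : ZMod 4, red (-x) = red x := by decide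
      exact ⟨_, inv _ _ hQ, by funext i; exact key _⟩
    · intro i
      obtain ⟨σ, a, hQ, h⟩ := hA i
      exact ⟨σ, _, ⟨a, hQ, rfl⟩, h⟩
    · obtain ⟨σ, a, hQ, h⟩ := hB
      exact ⟨σ, _, ⟨a, hQ, rfl⟩, h⟩
    · obtain ⟨σ, a, hQ, h⟩ := hC
      exact ⟨σ, _, ⟨a, hQ, rfl⟩, h⟩
    · obtain ⟨σ, a, hQ, h⟩ := hD
      exact ⟨σ, _, ⟨a, hQ, rfl⟩, h⟩
    · intro η
      obtain ⟨σ, a, hQ, h⟩ := hE η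
      exact ⟨σ, _, ⟨a, hQ, rfl⟩, h⟩
  obtain ⟨h1, h2⟩ := hh
  have ones : ∀ v, Q 1 v := by
    intro v
    obtain ⟨a1, hQ1, ha1⟩ := h1 (fun i => red (v i))
    obtain ⟨a2, hQ2, ha2⟩ := h1 (fun i => if v i = a1 i then 0 else 1)
    have h3 := mul _ _ _ _ hQ1 (mul _ _ _ _ hQ2 hQ2)
    have key : ∀ v a x : ZMod 4, red a = red v → red x = (if v = a then 0 else 1) →
      x + x + a = v := by decide
    have h4 : v = fun i => a2 i + a2 ((1 : Perm (Fin 3)) i) + a1 ((1 * 1 : Perm (Fin 3)) i) := by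
      funext i
      exact (key (v i) (a1 i) (a2 i) (congrFun ha1 i) (congrFun ha2 i)).symm
    rw [h4]
    simpa using h3
  intro σ a
  obtain ⟨s, a3, hQ3, -⟩ := h2 σ
  have h3 := mul _ _ _ _ hQ3 (ones (fun i => a i - a3 i))
  simpa using h3

end S_grp4

section S_cyc

open Polynomial Equiv

lemma Phi4_monic (c : ℚ) : (Phi4 c).Monic := by
  unfold Phi4; monicity!

lemma Phi4_natDegree (c : ℚ) : (Phi4 c).natDegree = 12 := by
  unfold Phi4; compute_degree!

lemma Phi4_ne_zero (c : ℚ) : Phi4 c ≠ 0 := (Phi4_monic c).ne_zero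

/-- the cycle structure of the roots -/
structure Cyc (c : ℚ) {L : Type*} [Field L] [Algebra ℚ L] (r : Fin 3 → ZMod 4 → L) : Prop where
  step : ∀ i j, r i (j + 1) = r i j ^ 2 + algebraMap ℚ L c
  inj : ∀ i j i' j', r i j = r i' j' → i = i' ∧ j = j'
  root : ∀ i j, aeval (r i j) (Phi4 c) = 0
  surj : ∀ x, aeval x (Phi4 c) = 0 → ∃ i j, x = r i j
  e1 : (∑ j, r 0 j) + (∑ j, r 1 j) + (∑ j, r 2 j) = 0
  e2 : (∑ j, r 0 j) * (∑ j, r 1 j) + (∑ j, r 0 j) * (∑ j, r 2 j) + (∑ j, r 1 j) * (∑ j, r 2 j)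
    = algebraMap ℚ L (4 * c + 3)
  e3 : (∑ j, r 0 j) * (∑ j, r 1 j) * (∑ j, r 2 j) = -4
  dsq : ∀ i, (∑ j, (chi2 (red j) : L) * r i j) ^ 2 = (∑ j, r i j) ^ 2 + 4

lemma sum4 {M : Type*} [AddCommMonoid M] (f : ZMod 4 → M) : ∑ j, f j = f 0 + f 1 + f 2 + f 3 :=
  Fin.sum_univ_four f

lemma one_cycle {K : Type*} [Field K] [CharZero K] [IsAlgClosed K] (c t : K)
    (ht : t ^ 3 + (4 * c + 3) * t + 4 = 0) :
    ∃ f : ZMod 4 → K, (∀ j, f (j + 1) = f j ^ 2 + c) ∧ ∑ j, f j = t ∧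
      (∑ j, (chi2 (red j) : K) * f j) ^ 2 = t ^ 2 + 4 ∧
      (f 0 = f 2 → t = -2 ∨ (4 * c - 1) ^ 2 = -4) := by
  obtain ⟨d, hd⟩ := IsAlgClosed.exists_pow_nat_eq (t ^ 2 + 4) (n := 2) (by norm_num)
  obtain ⟨p, hp⟩ : ∃ p, p = (t + d) / 2 := ⟨_, rfl⟩
  obtain ⟨q, hq⟩ : ∃ q, q = (t - d) / 2 := ⟨_, rfl⟩
  have hpq : p * q = -1 := by rw [hp, hq]; linear_combination (-1 / 4 : K) * hd
  have hpt : t = p + q := by rw [hp, hq]; ring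
  have hdp : d = p - q := by rw [hp, hq]; ring
  obtain ⟨w, hw⟩ := IsAlgClosed.exists_pow_nat_eq (2 * q - 4 * c - p ^ 2) (n := 2) (by norm_num)
  have hw2 : p ^ 2 * w ^ 2 = 2 * p - 4 * c - q ^ 2 := by
    rw [hw]; rw [hpt] at ht
    linear_combination (-p) * ht + (2 * p + q ^ 2 + 4 * c + 3 * p * (p + q) - 0) * hpq
  refine ⟨fun j => (![(p + w) / 2, (q + p * w) / 2, (p - w) / 2, (q - p * w) / 2] : Fin 4 → K) j,
    ?_, ?_, ?_, ?_⟩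
  · have h0 : (q + p * w) / 2 = ((p + w) / 2) ^ 2 + c := by linear_combination (-1 / 4 : K) * hw
    have h1 : (p - w) / 2 = ((q + p * w) / 2) ^ 2 + c := by
      linear_combination (-1 / 4 : K) * hw2 - (w / 2) * hpq
    have h2 : (q - p * w) / 2 = ((p - w) / 2) ^ 2 + c := by linear_combination (-1 / 4 : K) * hw
    have h3 : (p + w) / 2 = ((q - p * w) / 2) ^ 2 + c := by
      linear_combination (-1 / 4 : K) * hw2 + (w / 2) * hpq
    intro j
    change Fin 4 at j
    fin_cases j
    · exact h0
    · exact h1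
    · exact h2
    · exact h3
  · rw [sum4]
    show (p + w) / 2 + (q + p * w) / 2 + (p - w) / 2 + (q - p * w) / 2 = t
    rw [hpt]; ring
  · rw [sum4]
    have c0 : chi2 (red 0) = 1 := by decide
    have c1 : chi2 (red 1) = -1 := by decide
    have c2 : chi2 (red 2) = 1 := by decide
    have c3 : chi2 (red 3) = -1 := by decide
    rw [c0, c1, c2, c3]
    show (((1 : ℤ) : K) * ((p + w) / 2) + ((-1 : ℤ) : K) * ((q + p * w) / 2)
      + ((1 : ℤ) : K) * ((p - w) / 2) + ((-1 : ℤ) : K) * ((q - p * w) / 2)) ^ 2 = t ^ 2 + 4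
    rw [← hd, hdp]; push_cast; ring
  · intro h
    have h' : (p + w) / 2 = (p - w) / 2 := h
    have hw0 : w = 0 := by linear_combination h'
    rw [hw0] at hw hw2
    have h5 : (p - q) * (p + q + 2) = 0 := by linear_combination hw - hw2
    rcases mul_eq_zero.1 h5 with h6 | h6
    · right
      have h7 : q = p := by linear_combination -h6
      rw [h7] at hpq hw
      have h8 : 4 * c - 1 = 2 * p := by linear_combination hw - hpq
      rw [h8]; linear_combination 4 * hpq
    · left; rw [hpt]; linear_combination h6

lemma Phi4_eval {L : Type*} [Field L] [Algebra ℚ L] (c : ℚ) (x : L) :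
    aeval x (Phi4 c) * (((x ^ 2 + algebraMap ℚ L c) ^ 2 + algebraMap ℚ L c) - x)
    = ((((x ^ 2 + algebraMap ℚ L c) ^ 2 + algebraMap ℚ L c) ^ 2 + algebraMap ℚ L c) ^ 2
      + algebraMap ℚ L c) - x := by
  unfold Phi4
  simp only [map_add, map_mul, map_pow, aeval_X, aeval_C, map_one, map_ofNat]
  generalize algebraMap ℚ L c = c
  ring

end S_cyc

section S_cyc2

open Polynomial Equiv

lemma exists_roots3 {K : Type*} [Field K] [CharZero K] [IsAlgClosed K] (P : K) :
    ∃ t : Fin 3 → K, t 0 + t 1 + t 2 = 0 ∧ t 0 * t 1 + t 0 * t 2 + t 1 * t 2 = P ∧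
      t 0 * t 1 * t 2 = -4 := by
  have hdeg : (X ^ 3 + C P * X + C 4 : K[X]).degree = 3 := by compute_degree!
  obtain ⟨x, hx⟩ := IsAlgClosed.exists_root (X ^ 3 + C P * X + C 4 : K[X]) (by
    rw [hdeg]; norm_num)
  have hx' : x ^ 3 + P * x + 4 = 0 := by
    simpa [IsRoot] using hx
  obtain ⟨d, hd⟩ := IsAlgClosed.exists_pow_nat_eq (-3 * x ^ 2 - 4 * P) (n := 2) (by norm_num)
  refine ⟨![x, (-x + d) / 2, (-x - d) / 2], ?_, ?_, ?_⟩
  · show x + (-x + d) / 2 + (-x - d) / 2 = 0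
    ring
  · show x * ((-x + d) / 2) + x * ((-x - d) / 2) + ((-x + d) / 2) * ((-x - d) / 2) = P
    linear_combination (-1 / 4 : K) * hd
  · show x * ((-x + d) / 2) * ((-x - d) / 2) = -4
    linear_combination (-x / 4 : K) * hd + hx'

lemma disc3 {R : Type*} [CommRing R] (x y z P : R) (h1 : x + y + z = 0)
    (h2 : x * y + x * z + y * z = P) (h3 : x * y * z = -4) :
    ((x - y) * (x - z) * (y - z)) ^ 2 = -4 * (P ^ 3 + 108) := by
  have hz : z = - x - y := by linear_combination h1
  subst hz
  have h2' : P = -(x ^ 2 + x * y + y ^ 2) := by linear_combination -h2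
  subst h2'
  linear_combination (-27 * (x * y * (-x - y)) + 108) * h3

lemma iter_step {K : Type*} [Field K] {c : K} {f g : ZMod 4 → K}
    (hf : ∀ j, f (j + 1) = f j ^ 2 + c) (hg : ∀ j, g (j + 1) = g j ^ 2 + c)
    {j j' : ZMod 4} (h : f j = g j') (k : ZMod 4) : f (j + k) = g (j' + k) := by
  have key : ∀ n : ℕ, f (j + n) = g (j' + n) := by
    intro n
    induction n with
    | zero => simpa using h
    | succ n ih =>
      push_cast
      rw [← add_assoc, ← add_assoc, hf, hg, ih]
  have := key k.val
  rwa [ZMod.natCast_zmod_val] at this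

lemma exists_cyc {K : Type*} [Field K] [CharZero K] [IsAlgClosed K] [Algebra ℚ K] (c : ℚ)
    (hc : c ≠ -5 / 4) : ∃ r : Fin 3 → ZMod 4 → K, Cyc c r := by
  obtain ⟨a, ha⟩ : ∃ a : K, a = algebraMap ℚ K c := ⟨_, rfl⟩
  obtain ⟨t, h1, h2, h3⟩ := exists_roots3 (4 * a + 3)
  have hroot : ∀ i, t i ^ 3 + (4 * a + 3) * t i + 4 = 0 := by
    intro i
    fin_cases i
    · show t 0 ^ 3 + (4 * a + 3) * t 0 + 4 = 0
      linear_combination t 0 ^ 2 * h1 - t 0 * h2 + h3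
    · show t 1 ^ 3 + (4 * a + 3) * t 1 + 4 = 0
      linear_combination t 1 ^ 2 * h1 - t 1 * h2 + h3
    · show t 2 ^ 3 + (4 * a + 3) * t 2 + 4 = 0
      linear_combination t 2 ^ 2 * h1 - t 2 * h2 + h3
  choose f hstep hsum hd h02 using fun i => one_cycle a (t i) (hroot i)
  have hne : ∀ i, f i 0 ≠ f i 2 := by
    intro i h
    rcases h02 i h with h | h
    · apply hc
      have h4 := hroot i
      rw [h, ha] at h4
      have h5 : algebraMap ℚ K (8 * c + 10) = algebraMap ℚ K 0 := by
        simp only [map_add, map_mul, map_ofNat, map_zero]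
        linear_combination -h4
      have h6 := (algebraMap ℚ K).injective h5
      linarith
    · rw [ha] at h
      have h5 : algebraMap ℚ K ((4 * c - 1) ^ 2 + 4) = algebraMap ℚ K 0 := by
        simp only [map_add, map_sub, map_mul, map_pow, map_ofNat, map_one, map_zero]
        linear_combination h
      have h6 := (algebraMap ℚ K).injective h5
      nlinarith [sq_nonneg (4 * c - 1)]
  have hne' : ∀ i j, f i j ≠ f i (j + 2) := by
    intro i j h
    have h1 := iter_step (hstep i) (hstep i) h (-j)
    apply hne i
    rw [show j + -j = 0 by ring, show j + 2 + -j = 2 by ring] at h1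
    exact h1
  have hdisc : ((t 0 - t 1) * (t 0 - t 2) * (t 1 - t 2)) ≠ 0 := by
    intro h
    have h4 := disc3 _ _ _ _ h1 h2 h3
    rw [h, ha] at h4
    have h5 : algebraMap ℚ K ((4 * c + 3) ^ 3 + 108) = algebraMap ℚ K 0 := by
      simp only [map_add, map_mul, map_pow, map_ofNat, map_zero]
      linear_combination (1 / 4 : K) * h4
    have h6 := (algebraMap ℚ K).injective h5
    exact no_pts_108 (-(4 * c + 3)) 0 (by linear_combination h6)
  have htinj : ∀ i i', t i = t i' → i = i' := by
    intro i i' h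
    by_contra hn
    apply hdisc
    have a01 : t 0 = t 1 → (t 0 - t 1) * (t 0 - t 2) * (t 1 - t 2) = 0 := by
      intro h; rw [h]; ring
    have a02 : t 0 = t 2 → (t 0 - t 1) * (t 0 - t 2) * (t 1 - t 2) = 0 := by
      intro h; rw [h]; ring
    have a12 : t 1 = t 2 → (t 0 - t 1) * (t 0 - t 2) * (t 1 - t 2) = 0 := by
      intro h; rw [h]; ring
    fin_cases i <;> fin_cases i' <;> first
      | exact absurd rfl hn
      | exact a01 h
      | exact a01 h.symm
      | exact a02 h
      | exact a02 h.symm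
      | exact a12 h
      | exact a12 h.symm
  have hinj : ∀ i j i' j', f i j = f i' j' → i = i' ∧ j = j' := by
    intro i j i' j' h
    have h4 := iter_step (hstep i) (hstep i') h
    have hs : ∀ (g : ZMod 4 → K) (u : ZMod 4), ∑ k, g (u + k) = ∑ k, g k := fun g u =>
      Equiv.sum_comp (Equiv.addLeft u) g
    have h5 : t i = t i' := by
      rw [← hsum i, ← hsum i', ← hs (f i) j, ← hs (f i') j']
      exact Finset.sum_congr rfl fun k _ => h4 k
    have hii := htinj _ _ h5
    subst hii
    refine ⟨rfl, ?_⟩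
    obtain ⟨d, hd⟩ : ∃ d, d = j' - j := ⟨_, rfl⟩
    have h6 : ∀ x, f i x = f i (x + d) := by
      intro x
      have := h4 (x - j)
      rwa [show j + (x - j) = x by ring, show j' + (x - j) = x + d by rw [hd]; ring] at this
    have h7 : d = 0 ∨ d = 1 ∨ d = 2 ∨ d = 3 := by clear hd h6; revert d; decide
    rcases h7 with h7 | h7 | h7 | h7
    · rw [h7] at hd; exact (sub_eq_zero.1 hd.symm).symm
    · rw [h7] at h6
      exact absurd ((h6 0).trans (h6 (0 + 1))) (hne i)
    · rw [h7] at h6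
      exact absurd (h6 0) (hne i)
    · rw [h7] at h6
      exact absurd ((h6 0).trans (h6 (0 + 3))) (hne i)
  have hrt : ∀ i j, aeval (f i j) (Phi4 c) = 0 := by
    intro i j
    have h4 := Phi4_eval (L := K) c (f i j)
    rw [← ha, ← hstep, ← hstep, ← hstep, ← hstep, show j + 1 + 1 + 1 + 1 = j by
      rw [show j + 1 + 1 + 1 + 1 = j + 4 by ring, show (4 : ZMod 4) = 0 from rfl, add_zero],
      sub_self] at h4
    rcases mul_eq_zero.1 h4 with h5 | h5
    · exact h5
    · refine absurd (sub_eq_zero.1 h5).symm ?_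
      rw [show j + 1 + 1 = j + 2 by ring]
      exact hne' i j
  refine ⟨f, fun i j => by rw [hstep, ha], hinj, hrt, ?_, ?_, ?_, ?_, ?_⟩
  · intro x hx
    classical
    have hP0 : Phi4 c ≠ 0 := Phi4_ne_zero c
    let S : Finset K := Finset.univ.image fun p : Fin 3 × ZMod 4 => f p.1 p.2
    have hS : S.card = 12 := by
      rw [Finset.card_image_of_injective]
      · simp [ZMod.card]
      · rintro ⟨i, j⟩ ⟨i', j'⟩ h
        obtain ⟨h1, h2⟩ := hinj i j i' j' h
        rw [h1, h2]
    have hsub : S ⊆ ((Phi4 c).aroots K).toFinset := by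
      intro y hy
      obtain ⟨⟨i, j⟩, -, rfl⟩ := Finset.mem_image.1 hy
      rw [Multiset.mem_toFinset, mem_aroots]
      exact ⟨hP0, hrt i j⟩
    have hcard : ((Phi4 c).aroots K).toFinset.card ≤ S.card := by
      rw [hS]
      refine (Multiset.toFinset_card_le _).trans ?_
      refine (card_roots' _).trans ?_
      rw [natDegree_map, Phi4_natDegree]
    have heq := Finset.eq_of_subset_of_card_le hsub hcard
    have hx' : x ∈ ((Phi4 c).aroots K).toFinset := by
      rw [Multiset.mem_toFinset, mem_aroots]
      exact ⟨hP0, hx⟩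
    rw [← heq] at hx'
    obtain ⟨⟨i, j⟩, -, rfl⟩ := Finset.mem_image.1 hx'
    exact ⟨i, j, rfl⟩
  · rw [hsum, hsum, hsum]; exact h1
  · rw [hsum, hsum, hsum, h2, ha]; simp
  · rw [hsum, hsum, hsum]; exact h3
  · intro i; rw [hsum]; exact hd i

lemma exists_cyc_split (c : ℚ) (hc : c ≠ -5 / 4) :
    ∃ r : Fin 3 → ZMod 4 → (Phi4 c).SplittingField, Cyc c r := by
  obtain ⟨f, hf⟩ := exists_cyc (K := AlgebraicClosure ℚ) c hc
  let φ : (Phi4 c).SplittingField →ₐ[ℚ] AlgebraicClosure ℚ := IsAlgClosed.lift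
  have hφ : Function.Injective φ := φ.toRingHom.injective
  have hex : ∀ i j, ∃ x, φ x = f i j := by
    intro i j
    have h1 := (SplittingField.splits (Phi4 c)).image_rootSet φ
    have h2 : f i j ∈ (Phi4 c).rootSet (AlgebraicClosure ℚ) := by
      rw [mem_rootSet]; exact ⟨Phi4_ne_zero c, hf.root i j⟩
    rw [← h1] at h2
    obtain ⟨x, -, hx⟩ := h2
    exact ⟨x, hx⟩
  choose r hr using hex
  refine ⟨r, ?_, ?_, ?_, ?_, ?_, ?_, ?_, ?_⟩
  · intro i j; apply hφ; simp only [map_add, map_pow, hr, hf.step, AlgHom.commutes]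
  · intro i j i' j' h
    apply hf.inj; rw [← hr, ← hr, h]
  · intro i j; apply hφ
    rw [map_zero, ← aeval_algHom_apply, hr, hf.root]
  · intro x hx
    have h1 : aeval (φ x) (Phi4 c) = 0 := by rw [aeval_algHom_apply, hx, map_zero]
    obtain ⟨i, j, h⟩ := hf.surj _ h1
    exact ⟨i, j, hφ (by rw [h, hr])⟩
  · apply hφ; simpa only [map_add, map_sum, hr, map_zero] using hf.e1
  · apply hφ; simpa only [map_add, map_mul, map_sum, hr, AlgHom.commutes] using hf.e2
  · apply hφ; simpa only [map_neg, map_mul, map_sum, hr, map_ofNat] using hf.e3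
  · intro i; apply hφ
    simpa only [map_add, map_mul, map_pow, map_sum, hr, map_ofNat, map_intCast] using hf.dsq i

end S_cyc2

section S_gal

open Polynomial Equiv

/-- pairs realised by a field automorphism -/
def Real4 {L : Type*} [Field L] [Algebra ℚ L] (r : Fin 3 → ZMod 4 → L)
    (σ : Perm (Fin 3)) (a : Fin 3 → ZMod 4) : Prop :=
  ∃ g : L ≃ₐ[ℚ] L, ∀ i j, g (r i j) = r (σ i) (j + a i)

lemma perm3_cases : ∀ σ : Perm (Fin 3),
    (σ 0 = 0 ∧ σ 1 = 1 ∧ σ 2 = 2 ∧ Perm.sign σ = 1) ∨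
    (σ 0 = 1 ∧ σ 1 = 2 ∧ σ 2 = 0 ∧ Perm.sign σ = 1) ∨
    (σ 0 = 2 ∧ σ 1 = 0 ∧ σ 2 = 1 ∧ Perm.sign σ = 1) ∨
    (σ 0 = 1 ∧ σ 1 = 0 ∧ σ 2 = 2 ∧ Perm.sign σ = -1) ∨
    (σ 0 = 2 ∧ σ 1 = 1 ∧ σ 2 = 0 ∧ Perm.sign σ = -1) ∨
    (σ 0 = 0 ∧ σ 1 = 2 ∧ σ 2 = 1 ∧ Perm.sign σ = -1) := by decide

lemma vander_perm {R : Type*} [CommRing R] (t : Fin 3 → R) (σ : Perm (Fin 3)) :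
    (t (σ 0) - t (σ 1)) * (t (σ 0) - t (σ 2)) * (t (σ 1) - t (σ 2)) =
    ((Perm.sign σ : ℤ) : R) * ((t 0 - t 1) * (t 0 - t 2) * (t 1 - t 2)) := by
  rcases perm3_cases σ with ⟨h0, h1, h2, h⟩ | ⟨h0, h1, h2, h⟩ | ⟨h0, h1, h2, h⟩ |
    ⟨h0, h1, h2, h⟩ | ⟨h0, h1, h2, h⟩ | ⟨h0, h1, h2, h⟩ <;>
  · rw [h0, h1, h2, h]; push_cast; ring

lemma e2_perm {R : Type*} [CommRing R] (t : Fin 3 → R) (σ : Perm (Fin 3)) :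
    t (σ 0) * t (σ 1) + t (σ 0) * t (σ 2) + t (σ 1) * t (σ 2) =
    t 0 * t 1 + t 0 * t 2 + t 1 * t 2 := by
  rcases perm3_cases σ with ⟨h0, h1, h2, h⟩ | ⟨h0, h1, h2, h⟩ | ⟨h0, h1, h2, h⟩ |
    ⟨h0, h1, h2, h⟩ | ⟨h0, h1, h2, h⟩ | ⟨h0, h1, h2, h⟩ <;>
  · rw [h0, h1, h2]; try ring

lemma e3_perm {R : Type*} [CommRing R] (t : Fin 3 → R) (σ : Perm (Fin 3)) :
    t (σ 0) * t (σ 1) * t (σ 2) = t 0 * t 1 * t 2 := by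
  rcases perm3_cases σ with ⟨h0, h1, h2, h⟩ | ⟨h0, h1, h2, h⟩ | ⟨h0, h1, h2, h⟩ |
    ⟨h0, h1, h2, h⟩ | ⟨h0, h1, h2, h⟩ | ⟨h0, h1, h2, h⟩ <;>
  · rw [h0, h1, h2]; try ring

lemma chi2_sq : ∀ e : ZMod 2, chi2 e * chi2 e = 1 := by decide

lemma chi2_red_sub : ∀ k a : ZMod 4, chi2 (red (k - a)) = chi2 (red a) * chi2 (red k) := by decide

lemma gal_form {L : Type*} [Field L] [Algebra ℚ L] {c : ℚ} {r : Fin 3 → ZMod 4 → L}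
    (hr : Cyc c r) (g : L ≃ₐ[ℚ] L) :
    ∃ (σ : Perm (Fin 3)) (a : Fin 3 → ZMod 4), ∀ i j, g (r i j) = r (σ i) (j + a i) := by
  have hex : ∀ i, ∃ k a, g (r i 0) = r k a := by
    intro i
    apply hr.surj
    have h := aeval_algHom_apply (g : L →ₐ[ℚ] L) (r i 0) (Phi4 c)
    rw [hr.root, map_zero] at h
    exact h
  choose s a hs using hex
  have hform : ∀ i j, g (r i j) = r (s i) (j + a i) := by
    intro i j
    have h := iter_step (c := algebraMap ℚ L c) (f := fun j => g (r i j)) (g := r (s i))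
      (fun j => by simp only [hr.step, map_add, map_pow, AlgEquiv.commutes])
      (hr.step (s i)) (hs i) j
    simp only [zero_add] at h
    rw [h, add_comm]
  have hinj : Function.Injective s := by
    intro i i' h
    have h1 : g (r i (- a i)) = g (r i' (- a i')) := by
      rw [hform, hform, h]; simp
    exact (hr.inj _ _ _ _ (g.injective h1)).1
  exact ⟨Equiv.ofBijective s (Finite.injective_iff_bijective.1 hinj), a, hform⟩

lemma real4_mul {L : Type*} [Field L] [Algebra ℚ L] (r : Fin 3 → ZMod 4 → L) :
    ∀ σ' s' σ s, Real4 r σ' s' → Real4 r σ s → Real4 r (σ' * σ) (fun i => s i + s' (σ i)) := by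
  rintro σ' s' σ s ⟨g', h'⟩ ⟨g, h⟩
  refine ⟨g.trans g', fun i j => ?_⟩
  rw [AlgEquiv.trans_apply, h, h', Perm.mul_apply, add_assoc]

lemma real4_inv {L : Type*} [Field L] [Algebra ℚ L] (r : Fin 3 → ZMod 4 → L) :
    ∀ σ s, Real4 r σ s → Real4 r σ⁻¹ (fun i => - s (σ⁻¹ i)) := by
  rintro σ s ⟨g, h⟩
  refine ⟨g.symm, fun i j => ?_⟩
  rw [AlgEquiv.symm_apply_eq, h]
  simp

lemma rat_of_fixed {L : Type*} [Field L] [Algebra ℚ L] [FiniteDimensional ℚ L] [IsGalois ℚ L]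
    (x : L) (h : ∀ g : L ≃ₐ[ℚ] L, g x = x) : ∃ q : ℚ, algebraMap ℚ L q = x := by
  have := (IsGalois.mem_bot_iff_fixed (F := ℚ) (E := L) x).2 h
  exact IntermediateField.mem_bot.1 this

lemma T_act {L : Type*} [Field L] [Algebra ℚ L] {r : Fin 3 → ZMod 4 → L} {g : L ≃ₐ[ℚ] L}
    {σ : Perm (Fin 3)} {a : Fin 3 → ZMod 4} (h : ∀ i j, g (r i j) = r (σ i) (j + a i)) (i : Fin 3) :
    g (∑ j, r i j) = ∑ j, r (σ i) j := by
  rw [map_sum]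
  simp only [h]
  exact Equiv.sum_comp (Equiv.addRight (a i)) (r (σ i))

lemma D_act {L : Type*} [Field L] [Algebra ℚ L] {r : Fin 3 → ZMod 4 → L} {g : L ≃ₐ[ℚ] L}
    {σ : Perm (Fin 3)} {a : Fin 3 → ZMod 4} (h : ∀ i j, g (r i j) = r (σ i) (j + a i)) (i : Fin 3) :
    g (∑ j, (chi2 (red j) : L) * r i j) =
      (chi2 (red (a i)) : L) * ∑ j, (chi2 (red j) : L) * r (σ i) j := by
  rw [map_sum, Finset.mul_sum]
  simp only [map_mul, map_intCast, h]
  rw [← Equiv.sum_comp (Equiv.addRight (a i))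
    (fun j => (chi2 (red (a i)) : L) * ((chi2 (red j) : L) * r (σ i) j))]
  refine Finset.sum_congr rfl fun j _ => ?_
  simp only [Equiv.coe_addRight]
  have := chi2_red_sub (j + a i) (a i)
  rw [add_sub_cancel_right] at this
  rw [this]; push_cast; ring

lemma arith_C (c q : ℚ) (h : q ^ 2 = 4 * ((4 * c - 1) ^ 2 + 4)) :
    ∃ r : ℚ, r ≠ 0 ∧ c = (r ^ 2 + 2 * r - 4) / (8 * r) := by
  have h4 : (q / 2 - (4 * c - 1)) * (q / 2 + (4 * c - 1)) = 4 := by linear_combination h / 4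
  have hr : 4 * c - 1 + q / 2 ≠ 0 := by
    intro h0
    rw [show q / 2 + (4 * c - 1) = 0 by linear_combination h0] at h4
    norm_num at h4
  refine ⟨4 * c - 1 + q / 2, hr, ?_⟩
  rw [eq_div_iff (by simpa using hr)]
  linear_combination -h4

lemma arith_A (c q : ℚ) (h : q ^ 3 + (4 * c + 3) * q + 4 = 0) :
    ∃ r : ℚ, r ≠ 0 ∧ c = (4 - 3 * r - r ^ 3) / (4 * r) := by
  have hq : q ≠ 0 := by rintro rfl; norm_num at h
  refine ⟨-q, neg_ne_zero.2 hq, ?_⟩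
  rw [eq_div_iff (by simpa using hq)]
  linear_combination -h

lemma arith_E (c x : ℚ) (h : (x ^ 2 - (4 * c - 1) * (4 * c - 1 - 8)) ^ 2
    = 32 * ((4 * c - 1) ^ 2 + 4) * (x - (4 * c - 1) + 2)) : c = 0 ∨ c = -5 / 2 := by
  obtain ⟨v, hv⟩ : ∃ v, v = 4 * c - 1 := ⟨_, rfl⟩
  obtain ⟨s, hs⟩ : ∃ s, s = x - v := ⟨_, rfl⟩
  have hx : x = s + v := by rw [hs]; ring
  rw [← hv, hx] at h
  have h1 : 4 * s ^ 2 * v ^ 2 + 4 * s ^ 2 * (s + 4) * v + s ^ 4 - 128 * (s + 2) = 0 := by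
    linear_combination h
  have h2 : (s / 2 + 1) * ((s / 2 + 1) ^ 2 - 2 * (s / 2 + 1) + 5) =
      ((2 * s * v + s * (s + 4)) / 8) ^ 2 := by
    linear_combination (-1 / 64) * h1
  rcases ell20_points _ _ h2 with h3 | h3 | h3
  · have hs2 : s = -2 := by linarith
    rw [hs2] at h1
    have : (v + 1) ^ 2 = 0 := by linear_combination h1 / 16
    have := pow_eq_zero_iff (two_ne_zero) |>.1 this
    left; linarith
  · have hs2 : s = 0 := by linarith
    rw [hs2] at h1; norm_num at h1
  · have hs2 : s = 8 := by linarith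
    rw [hs2] at h1
    have : (v + 1) * (v + 11) = 0 := by linear_combination h1 / 256
    rcases mul_eq_zero.1 this with h | h
    · left; linarith
    · right; linarith

end S_gal

section S_gal2

open Polynomial Equiv

lemma real4_all {L : Type*} [Field L] [Algebra ℚ L] [FiniteDimensional ℚ L] [IsGalois ℚ L]
    {c : ℚ} {r : Fin 3 → ZMod 4 → L} (hr : Cyc c r) (hc0 : c ≠ 0) (hc1 : c ≠ -5 / 2)
    (hlam : ¬ ∃ r : ℚ, r ≠ 0 ∧ c = (r ^ 2 + 2 * r - 4) / (8 * r))
    (heta : ¬ ∃ r : ℚ, r ≠ 0 ∧ c = (4 - 3 * r - r ^ 3) / (4 * r)) :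
    ∀ σ a, Real4 r σ a := by
  have hchar : CharZero L := algebraRat.charZero L
  obtain ⟨T, hT⟩ : ∃ T : Fin 3 → L, T = fun i => ∑ j, r i j := ⟨_, rfl⟩
  obtain ⟨D, hD⟩ : ∃ D : Fin 3 → L, D = fun i => ∑ j, (chi2 (red j) : L) * r i j := ⟨_, rfl⟩
  have e1 : T 0 + T 1 + T 2 = 0 := by rw [hT]; exact hr.e1
  have e2 : T 0 * T 1 + T 0 * T 2 + T 1 * T 2 = algebraMap ℚ L (4 * c + 3) := by
    rw [hT]; exact hr.e2
  have e3 : T 0 * T 1 * T 2 = -4 := by rw [hT]; exact hr.e3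
  have dsq : ∀ i, D i ^ 2 = T i ^ 2 + 4 := by rw [hT, hD]; exact hr.dsq
  have gT : ∀ (g : L ≃ₐ[ℚ] L) (σ : Perm (Fin 3)) (a : Fin 3 → ZMod 4),
      (∀ i j, g (r i j) = r (σ i) (j + a i)) → ∀ i, g (T i) = T (σ i) := by
    intro g σ a h i; rw [hT]; exact T_act h i
  have gD : ∀ (g : L ≃ₐ[ℚ] L) (σ : Perm (Fin 3)) (a : Fin 3 → ZMod 4),
      (∀ i j, g (r i j) = r (σ i) (j + a i)) →
      ∀ i, g (D i) = (chi2 (red (a i)) : L) * D (σ i) := by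
    intro g σ a h i; rw [hD]; exact D_act h i
  clear hT hD
  have ainj := (algebraMap ℚ L).injective
  obtain ⟨p, hp⟩ : ∃ p : L, p = algebraMap ℚ L c := ⟨_, rfl⟩
  have hdel : ((T 0 - T 1) * (T 0 - T 2) * (T 1 - T 2)) ^ 2
      = -4 * ((4 * p + 3) ^ 3 + 108) := by
    apply disc3 _ _ _ _ e1 _ e3
    rw [e2, hp]; simp
  have e2' : T 0 * T 1 + T 0 * T 2 + T 1 * T 2 = 4 * p + 3 := by rw [e2, hp]; simp
  clear e2
  have hz : T 2 = - T 0 - T 1 := by linear_combination e1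
  have hroot : ∀ i, T i ^ 3 + (4 * p + 3) * T i + 4 = 0 := by
    intro i
    fin_cases i
    · show T 0 ^ 3 + (4 * p + 3) * T 0 + 4 = 0
      linear_combination T 0 ^ 2 * e1 - T 0 * e2' + e3
    · show T 1 ^ 3 + (4 * p + 3) * T 1 + 4 = 0
      linear_combination T 1 ^ 2 * e1 - T 1 * e2' + e3
    · show T 2 ^ 3 + (4 * p + 3) * T 2 + 4 = 0
      linear_combination T 2 ^ 2 * e1 - T 2 * e2' + e3
  have d3 : (D 0 * D 1 * D 2) ^ 2 = 4 * ((4 * p - 1) ^ 2 + 4) := by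
    rw [mul_pow, mul_pow, dsq, dsq, dsq]
    linear_combination (T 0 * T 1 * T 2 - 4) * e3 +
      (-8 * (T 0 * T 1 * T 2) + 16 * (T 0 + T 1 + T 2)) * e1 +
      4 * ((T 0 * T 1 + T 0 * T 2 + T 1 * T 2) + (4 * p + 3) - 8) * e2'
  have d1 : D 0 ^ 2 + D 1 ^ 2 + D 2 ^ 2 = 4 - 2 * (4 * p - 1) := by
    rw [dsq, dsq, dsq]; linear_combination (T 0 + T 1 + T 2) * e1 - 2 * e2'
  have d2 : D 0 ^ 2 * D 1 ^ 2 + D 0 ^ 2 * D 2 ^ 2 + D 1 ^ 2 * D 2 ^ 2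
      = (4 * p - 1) * (4 * p - 1 - 8) := by
    rw [dsq, dsq, dsq]
    linear_combination (-2 * (T 0 * T 1 * T 2) + 8 * (T 0 + T 1 + T 2)) * e1 +
      ((T 0 * T 1 + T 0 * T 2 + T 1 * T 2) + (4 * p + 3) - 16) * e2'
  have hchi : ∀ x y z : ZMod 2, chi2 (x + y + z) = chi2 x * chi2 y * chi2 z := by decide
  have gDD : ∀ (g : L ≃ₐ[ℚ] L) (σ : Perm (Fin 3)) (a : Fin 3 → ZMod 4),
      (∀ i j, g (r i j) = r (σ i) (j + a i)) →
      g (D 0 * D 1 * D 2) =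
        (chi2 (red (a 0) + red (a 1) + red (a 2)) : L) * (D 0 * D 1 * D 2) := by
    intro g σ a h
    rw [map_mul, map_mul, gD g σ a h, gD g σ a h, gD g σ a h, hchi, ← e3_perm D σ]
    push_cast; ring
  have gV : ∀ (g : L ≃ₐ[ℚ] L) (σ : Perm (Fin 3)) (a : Fin 3 → ZMod 4),
      (∀ i j, g (r i j) = r (σ i) (j + a i)) →
      g ((T 0 - T 1) * (T 0 - T 2) * (T 1 - T 2)) =
        ((Perm.sign σ : ℤ) : L) * ((T 0 - T 1) * (T 0 - T 2) * (T 1 - T 2)) := by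
    intro g σ a h
    rw [← vander_perm]
    simp only [map_mul, map_sub, gT g σ a h]
  refine grp4 (Real4 r) (real4_mul r) (real4_inv r) ?_ ?_ ?_ ?_ ?_
  · intro i
    by_contra hn
    push Not at hn
    obtain ⟨q, hq⟩ := rat_of_fixed (T i) (fun g => by
      obtain ⟨σ, a, h⟩ := gal_form hr g
      rw [gT g σ a h, hn σ a ⟨g, h⟩])
    apply heta
    apply arith_A c q
    apply ainj
    have := hroot i
    rw [← hq, hp] at this
    simpa using this
  · by_contra hn
    push Not at hn
    obtain ⟨q, hq⟩ := rat_of_fixed ((T 0 - T 1) * (T 0 - T 2) * (T 1 - T 2)) (fun g => by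
      obtain ⟨σ, a, h⟩ := gal_form hr g
      rw [gV g σ a h, hn σ a ⟨g, h⟩]; simp)
    have h5 : q ^ 2 = -4 * ((4 * c + 3) ^ 3 + 108) := by
      apply ainj
      rw [← hq, hp] at hdel
      simpa using hdel
    exact no_pts_108 (-(4 * c + 3)) (q / 2) (by linear_combination h5 / 4)
  · by_contra hn
    push Not at hn
    obtain ⟨q, hq⟩ := rat_of_fixed (D 0 * D 1 * D 2) (fun g => by
      obtain ⟨σ, a, h⟩ := gal_form hr g
      rw [gDD g σ a h, hn σ a ⟨g, h⟩]; simp [chi2])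
    apply hlam
    apply arith_C c q
    apply ainj
    rw [← hq, hp] at d3
    simpa using d3
  · by_contra hn
    push Not at hn
    obtain ⟨q, hq⟩ := rat_of_fixed ((T 0 - T 1) * (T 0 - T 2) * (T 1 - T 2) * (D 0 * D 1 * D 2))
      (fun g => by
      obtain ⟨σ, a, h⟩ := gal_form hr g
      have h1 := hn σ a ⟨g, h⟩
      have h2 := congrArg (fun z : ℤ => (z : L)) h1
      simp only [Int.cast_mul, Int.cast_one] at h2
      rw [map_mul, gDD g σ a h, gV g σ a h]
      linear_combination ((T 0 - T 1) * (T 0 - T 2) * (T 1 - T 2) * (D 0 * D 1 * D 2)) * h2)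
    have h5 : q ^ 2 = -4 * ((4 * c + 3) ^ 3 + 108) * (4 * ((4 * c - 1) ^ 2 + 4)) := by
      apply ainj
      have h6 := congrArg (· ^ 2) hq
      simp only [mul_pow _ (D 0 * D 1 * D 2), hdel, d3, hp] at h6
      simpa using h6
    exact no_pts_genus2 (-(4 * c + 3)) (q / 4) (by linear_combination -h5 / 16)
  · intro η
    by_contra hn
    push Not at hn
    obtain ⟨E, hE⟩ : ∃ E : Fin 3 → L, E = fun i => (chi2 (η i) : L) * D i := ⟨_, rfl⟩
    have hEi : ∀ i, E i = (chi2 (η i) : L) * D i := fun i => by rw [hE]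
    have hsq : ∀ e, (chi2 e : L) * (chi2 e : L) = 1 := by
      intro e; exact_mod_cast congrArg (fun z : ℤ => (z : L)) (chi2_sq e)
    have hE2 : ∀ i, E i ^ 2 = D i ^ 2 := by
      intro i; rw [hEi]; linear_combination D i ^ 2 * hsq (η i)
    obtain ⟨q, hq⟩ := rat_of_fixed (E 0 * E 1 + E 0 * E 2 + E 1 * E 2) (fun g => by
      obtain ⟨σ, a, h⟩ := gal_form hr g
      obtain ⟨ε, hε⟩ := hn σ a ⟨g, h⟩
      have gE : ∀ i, g (E i) = (chi2 ε : L) * E (σ i) := by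
        intro i
        rw [hEi, hEi, map_mul, map_intCast, gD g σ a h, hε]
        have hh : ∀ x y z : ZMod 2, chi2 x * chi2 y = chi2 z * chi2 (x + y + z) := by decide
        have := congrArg (fun z : ℤ => (z : L)) (hh (η i) (red (a i)) ε)
        simp only [Int.cast_mul] at this
        linear_combination D (σ i) * this
      simp only [map_add, map_mul, gE]
      rw [← e2_perm E σ]
      linear_combination (E (σ 0) * E (σ 1) + E (σ 0) * E (σ 2) + E (σ 1) * E (σ 2)) * hsq ε)
    have h5 : (q ^ 2 - (4 * c - 1) * (4 * c - 1 - 8)) ^ 2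
        = 32 * ((4 * c - 1) ^ 2 + 4) * (q - (4 * c - 1) + 2) := by
      apply ainj
      simp only [map_mul, map_add, map_sub, map_pow, map_ofNat, map_one, ← hp, hq]
      have w2 : (E 0 * E 1 * E 2) ^ 2 = 4 * ((4 * p - 1) ^ 2 + 4) := by
        rw [← d3]; simp only [mul_pow, hE2]
      rw [← hE2, ← hE2, ← hE2] at d1 d2
      rw [← d2]
      linear_combination 4 * (E 0 + E 1 + E 2) ^ 2 * w2 + 16 * ((4 * p - 1) ^ 2 + 4) * d1
    rcases arith_E c q h5 with h | h
    · exact hc0 h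
    · exact hc1 h

end S_gal2

open Polynomial Equiv

/-- the shift permutation -/
def shift12 : Perm (Fin 12) :=
  ([0, 1, 2, 3] : List (Fin 12)).formPerm *
      ([4, 5, 6, 7] : List (Fin 12)).formPerm *
      ([8, 9, 10, 11] : List (Fin 12)).formPerm

def pr1 (k : Fin 12) : Fin 3 := ⟨k.val / 4, by omega⟩

def pr2 (k : Fin 12) : ZMod 4 := ((k.val : ℕ) : ZMod 4)

def pe (i : Fin 3) (j : ZMod 4) : Fin 12 := ⟨4 * i.val + j.val, by
  have := ZMod.val_lt j; omega⟩

lemma pe_pr : ∀ k, pe (pr1 k) (pr2 k) = k := by decide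

lemma pr1_pe : ∀ i j, pr1 (pe i j) = i := by decide

lemma pr2_pe : ∀ i j, pr2 (pe i j) = j := by decide

lemma shift_pe : ∀ i j, shift12 (pe i j) = pe i (j + 1) := by decide

lemma irred_of_all {c : ℚ} {L : Type*} [Field L] [Algebra ℚ L] {r : Fin 3 → ZMod 4 → L}
    (hr : Cyc c r) (hall : ∀ σ a, Real4 r σ a) : Irreducible (Phi4 c) := by
  classical
  have hint : IsIntegral ℚ (r 0 0) := ⟨Phi4 c, Phi4_monic c, hr.root 0 0⟩
  have hdvd : minpoly ℚ (r 0 0) ∣ Phi4 c := minpoly.dvd _ _ (hr.root 0 0)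
  have hrt : ∀ i j, aeval (r i j) (minpoly ℚ (r 0 0)) = 0 := by
    intro i j
    obtain ⟨g, hg⟩ := hall (Equiv.swap 0 i) (fun _ => j)
    have h1 := hg 0 0
    rw [Equiv.swap_apply_left, zero_add] at h1
    have h := aeval_algHom_apply (g : L →ₐ[ℚ] L) (r 0 0) (minpoly ℚ (r 0 0))
    rw [minpoly.aeval, map_zero] at h
    rw [← h1]; exact h
  have hdeg : 12 ≤ (minpoly ℚ (r 0 0)).natDegree := by
    let S : Finset L := Finset.univ.image fun p : Fin 3 × ZMod 4 => r p.1 p.2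
    have hS : S.card = 12 := by
      rw [Finset.card_image_of_injective]
      · simp [ZMod.card]
      · rintro ⟨i, j⟩ ⟨i', j'⟩ h
        obtain ⟨h1, h2⟩ := hr.inj i j i' j' h
        rw [h1, h2]
    have hsub : S ⊆ ((minpoly ℚ (r 0 0)).aroots L).toFinset := by
      intro y hy
      obtain ⟨⟨i, j⟩, -, rfl⟩ := Finset.mem_image.1 hy
      rw [Multiset.mem_toFinset, mem_aroots]
      exact ⟨minpoly.ne_zero hint, hrt i j⟩
    rw [← hS]
    refine (Finset.card_le_card hsub).trans ?_
    refine (Multiset.toFinset_card_le _).trans ?_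
    refine (card_roots' _).trans ?_
    rw [natDegree_map]
  have heq := eq_of_monic_of_dvd_of_natDegree_le (minpoly.monic hint) (Phi4_monic c) hdvd
    (by rw [Phi4_natDegree]; exact hdeg)
  rw [heq]
  exact minpoly.irreducible hint

lemma iso_of_all {c : ℚ} {r : Fin 3 → ZMod 4 → (Phi4 c).SplittingField}
    (hr : Cyc c r) (hall : ∀ σ a, Real4 r σ a) : Nonempty ((Phi4 c).Gal ≃* Wgroup) := by
  obtain ⟨R, hR⟩ : ∃ R : Fin 12 → (Phi4 c).SplittingField, ∀ k, R k = r (pr1 k) (pr2 k) :=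
    ⟨_, fun _ => rfl⟩
  have hRe : ∀ i j, R (pe i j) = r i j := by
    intro i j; rw [hR, pr1_pe, pr2_pe]
  have hRinj : Function.Injective R := by
    intro k l h
    rw [hR, hR] at h
    obtain ⟨h1, h2⟩ := hr.inj _ _ _ _ h
    rw [← pe_pr k, ← pe_pr l, h1, h2]
  have hRs : ∀ k, R (shift12 k) = R k ^ 2 + algebraMap ℚ _ c := by
    intro k
    rw [← pe_pr k, shift_pe, hRe, hRe, hr.step]
  have hex : ∀ (g : (Phi4 c).Gal) (k : Fin 12), ∃ l, g (R k) = R l := by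
    intro g k
    obtain ⟨σ, a, h⟩ := gal_form hr g
    refine ⟨pe (σ (pr1 k)) (pr2 k + a (pr1 k)), ?_⟩
    rw [hRe, hR]; exact h _ _
  choose π hπ using hex
  let F : (Phi4 c).Gal →* Function.End (Fin 12) :=
    { toFun := π
      map_one' := by
        funext k
        apply hRinj
        rw [← hπ]; rfl
      map_mul' := by
        intro g h
        funext k
        apply hRinj
        rw [← hπ]
        show g (h (R k)) = R (π g (π h k))
        rw [hπ, hπ] }
  let G : (Phi4 c).Gal →* Perm (Fin 12) := F.toHomPerm
  have hG : ∀ g k, R (G g k) = g (R k) := fun g k => (hπ g k).symm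
  have hmem : ∀ g, G g ∈ Wgroup := by
    intro g
    show G g ∈ Subgroup.centralizer {shift12}
    rw [Subgroup.mem_centralizer_singleton_iff]
    ext1 k
    apply hRinj
    rw [Perm.mul_apply, Perm.mul_apply, hG, hRs, hRs, hG, map_add, map_pow]
    congr 1
    exact AlgEquiv.commutes g c
  let H : (Phi4 c).Gal →* Wgroup := G.codRestrict Wgroup hmem
  refine ⟨MulEquiv.ofBijective H ⟨?_, ?_⟩⟩
  · intro g h hgh
    apply Gal.ext
    intro x hx
    rw [mem_rootSet] at hx
    obtain ⟨i, j, rfl⟩ := hr.surj x hx.2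
    have h1 : G g = G h := congrArg Subtype.val hgh
    rw [← hRe, ← hG, ← hG, h1]
  · rintro ⟨w, hw⟩
    have hw' : w ∈ Subgroup.centralizer {shift12} := hw
    rw [Subgroup.mem_centralizer_singleton_iff] at hw'
    have hcomm : ∀ k, w (shift12 k) = shift12 (w k) := by
      intro k
      have h1 := congrArg (fun z : Perm (Fin 12) => z k) hw'
      simpa only [Perm.mul_apply] using h1
    have hform : ∀ i j, R (w (pe i j)) = r (pr1 (w (pe i 0))) (j + pr2 (w (pe i 0))) := by
      intro i j
      have h := iter_step (c := algebraMap ℚ _ c) (f := fun j => R (w (pe i j)))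
        (g := r (pr1 (w (pe i 0)))) (j := 0) (j' := pr2 (w (pe i 0)))
        (fun j => by rw [← shift_pe, hcomm, hRs]) (hr.step _) (hR _) j
      simp only [zero_add] at h
      rw [h, add_comm]
    have hinj : Function.Injective fun i => pr1 (w (pe i 0)) := by
      intro i i' h
      have h1 : R (w (pe i (- pr2 (w (pe i 0))))) = R (w (pe i' (- pr2 (w (pe i' 0))))) := by
        rw [hform, hform, neg_add_cancel, neg_add_cancel]
        exact congrArg (fun z => r z 0) h
      have h2 := congrArg pr1 (w.injective (hRinj h1))
      rwa [pr1_pe, pr1_pe] at h2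
    obtain ⟨g, hg⟩ := hall (Equiv.ofBijective _ (Finite.injective_iff_bijective.1 hinj))
      (fun i => pr2 (w (pe i 0)))
    refine ⟨g, ?_⟩
    apply Subtype.ext
    show G g = w
    ext1 k
    apply hRinj
    refine (hG g k).trans ?_
    rw [← pe_pr k, hform, hRe]
    exact hg _ _

theorem phi4_galois_generic (c : ℚ)
    (hc : c ∉ ({-5, -5/2, -155/72, -2, -5/4, 0, 19/16} : Set ℚ))
    (hlam : ¬ ∃ r : ℚ, r ≠ 0 ∧ c = (r ^ 2 + 2 * r - 4) / (8 * r))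
    (heta : ¬ ∃ r : ℚ, r ≠ 0 ∧ c = (4 - 3 * r - r ^ 3) / (4 * r)) :
    Irreducible (Phi4 c) ∧ Nonempty ((Phi4 c).Gal ≃* Wgroup) := by
  have h1 : c ≠ -5 / 4 := by rintro rfl; exact hc (by simp)
  have h2 : c ≠ -5 / 2 := by rintro rfl; exact hc (by simp)
  have h3 : c ≠ 0 := by rintro rfl; exact hc (by simp)
  obtain ⟨r, hr⟩ := exists_cyc_split c h1
  have hsf : IsSplittingField ℚ (Phi4 c).SplittingField (Phi4 c) :=
    IsSplittingField.splittingField (Phi4 c)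
  have hnorm : Normal ℚ (Phi4 c).SplittingField := Normal.of_isSplittingField (Phi4 c)
  have hgal : IsGalois ℚ (Phi4 c).SplittingField := ⟨⟩
  have hall := real4_all hr h3 h2 hlam heta
  exact ⟨irred_of_all hr hall, iso_of_all hr hall⟩
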